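/- arXiv:1809.03089 — 2 statements merged into one kernel-verified Lean document; each statement's English description precedes it below -/
import Mathlib

section
/- Fix an integer ℓ ≥ 2 and a parameter ρ > 0. There exist constants N = N(ℓ,ρ) and C = C(ℓ,ρ) such that the following holds. Let κ_1,…,κ_ℓ be positive integers with κ_i ≥ ρn for all i, summing to n ≥ N. If f : M_κ → ℝ is a degree-one function satisfying E[dist(f,{0,1})²] = ε, then there exists a Boolean function g : M_κ → {0,1} depending on at most one coordinate such that E[(f−g)²] ≤ ε + Cε². -/
open Finset

noncomputable section

/-- The multislice: vectors in `[ℓ]^n` whose colour counts are given by `κ`. -/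
def multislice (ℓ n : ℕ) (κ : Fin ℓ → ℕ) : Finset (Fin n → Fin ℓ) :=
  Finset.univ.filter fun u => ∀ i, (Finset.univ.filter fun j => u j = i).card = κ i

/-- Expectation with respect to the uniform measure on the multislice. -/
def msExp (ℓ n : ℕ) (κ : Fin ℓ → ℕ) (f : (Fin n → Fin ℓ) → ℝ) : ℝ :=
  (∑ u ∈ multislice ℓ n κ, f u) / ((multislice ℓ n κ).card : ℝ)

/-- The indicator variable `x_{ji}`. -/
def xvar (ℓ n : ℕ) (j : Fin n) (i : Fin ℓ) (u : Fin n → Fin ℓ) : ℝ :=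
  if u j = i then 1 else 0

/-- A function on the multislice has degree one if it is of the form
`c + ∑_j ∑_i c_{ji} x_{ji}`. -/
def degreeOne (ℓ n : ℕ) (κ : Fin ℓ → ℕ) (f : (Fin n → Fin ℓ) → ℝ) : Prop :=
  ∃ (c : ℝ) (coef : Fin n → Fin ℓ → ℝ), ∀ u ∈ multislice ℓ n κ,
    f u = c + ∑ j, ∑ i, coef j i * xvar ℓ n j i u

/-- Distance of a real number to the set `{0,1}`. -/
def dist01 (x : ℝ) : ℝ := min |x| |x - 1|

/-- A function is Boolean on the multislice if it takes values in `{0,1}` there. -/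
def booleanOn (ℓ n : ℕ) (κ : Fin ℓ → ℕ) (g : (Fin n → Fin ℓ) → ℝ) : Prop :=
  ∀ u ∈ multislice ℓ n κ, g u = 0 ∨ g u = 1

/-- A dictator: a function depending on at most one coordinate. -/
def dictator (ℓ n : ℕ) (κ : Fin ℓ → ℕ) (g : (Fin n → Fin ℓ) → ℝ) : Prop :=
  ∃ j : Fin n, ∀ u ∈ multislice ℓ n κ, ∀ v ∈ multislice ℓ n κ, u j = v j → g u = g v

/-!
Write `f` as a sum of functions of single coordinates. Transposing two coordinates changes `f` by an
amount that depends only on the two colours involved. If `E[dist(f, {0,1})²]` is small, then by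
averaging every pattern on four coordinates is realised by some `u` at which `f`, and its images
under two disjoint transpositions, are all close to `{0,1}`. Hence every such change is either small
or close to `1` in absolute value, and two disjoint transpositions cannot both produce large
changes. The pairs of coordinates with a large change form a complete multipartite graph without two
disjoint edges, which on at least four vertices is a star, centred at some coordinate `j`.

What remains of `f` after subtracting its conditional mean given `u j` is an eigenfunction of the
random transposition walk on the other coordinates, and all its changes under this walk are small.
Testing the eigenvalue equation against a truncation of `f` bounds the variance of the residual by
`O(ε)`; testing it against the cube of the residual bounds the fourth moment by the square of the
variance, hence by `O(ε²)`. Finally, round the conditional mean to `{0,1}`: the squared error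
exceeds `dist(f, {0,1})²` by at most a quartic term, whose expectation is `O(ε²)`.
-/

open scoped BigOperators

namespace Multislice

section CoordSum

variable {ι α R : Type*}

/-- The additively separable function `u ↦ ∑_j w_j(u_j)`. These are the degree-one functions on a
multislice: the constant term is spread evenly over the coordinates. -/
def coordSum [Fintype ι] [AddCommMonoid R] (w : ι → α → R) (u : ι → α) : R :=
  ∑ j, w j (u j)

/-- The decrease `F(u) - F(u ∘ (k m))` of `F = coordSum w` under the transposition of the
coordinates `k` and `m`, as a function of the colours `a = u_k` and `b = u_m`. -/
def swapDiff [AddCommGroup R] (w : ι → α → R) (k m : ι) (a b : α) : R :=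
  w k a + w m b - w k b - w m a

section AddCommGroup

variable [AddCommGroup R] (w : ι → α → R) (k m r : ι) (a b : α)

lemma swapDiff_self : swapDiff w k k a b = 0 := by
  unfold swapDiff; abel

lemma swapDiff_comm : swapDiff w m k b a = swapDiff w k m a b := by
  unfold swapDiff; abel

lemma swapDiff_swap_colors : swapDiff w k m b a = -swapDiff w k m a b := by
  unfold swapDiff; abel

lemma swapDiff_eq_sub : swapDiff w k m a b = swapDiff w k r a b - swapDiff w m r a b := by
  unfold swapDiff; abel

lemma coordSum_comp_swap [Fintype ι] [DecidableEq ι] (u : ι → α) :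
    coordSum w (u ∘ Equiv.swap k m) = coordSum w u - swapDiff w k m (u k) (u m) := by
  obtain rfl | hkm := eq_or_ne k m
  · simp [swapDiff_self]
  have hdiff : ∑ j, (w j (u j) - w j ((u ∘ Equiv.swap k m) j)) = swapDiff w k m (u k) (u m) := by
    rw [← sum_subset (subset_univ {k, m}), sum_pair hkm]
    · simp only [Function.comp_apply, Equiv.swap_apply_left, Equiv.swap_apply_right, swapDiff]
      abel
    · intro x _ hx
      simp only [mem_insert, mem_singleton, not_or] at hx
      simp [Equiv.swap_apply_of_ne_of_ne hx.1 hx.2]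
  rw [coordSum, coordSum, ← hdiff, sum_sub_distrib, sub_sub_cancel]

end AddCommGroup

lemma sum_sum_swapDiff [CommRing R] (w : ι → α → R) (u : ι → α) (s : Finset ι) :
    ∑ k ∈ s, ∑ m ∈ s, swapDiff w k m (u k) (u m) =
      2 * (#s * ∑ k ∈ s, w k (u k) - ∑ k ∈ s, ∑ m ∈ s, w k (u m)) := by
  simp only [swapDiff, sum_sub_distrib, sum_add_distrib, sum_const, nsmul_eq_mul, ← mul_sum]
  rw [sum_comm (f := fun k m => w m (u k))]
  ring

end CoordSum

section Exchangeability

variable {ℓ n : ℕ} {κ : Fin ℓ → ℕ}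

lemma msExp_eq_expect (f : (Fin n → Fin ℓ) → ℝ) :
    msExp ℓ n κ f = 𝔼 u ∈ multislice ℓ n κ, f u :=
  (expect_eq_sum_div_card _ _).symm

lemma mem_multislice {u : Fin n → Fin ℓ} :
    u ∈ multislice ℓ n κ ↔ ∀ i, #{j | u j = i} = κ i := by
  simp [multislice]

lemma multislice_nonempty (hκ : ∑ i, κ i = n) : (multislice ℓ n κ).Nonempty := by
  subst hκ
  refine ⟨fun x => (finSigmaFinEquiv.symm x).1, mem_multislice.mpr fun i => ?_⟩
  rw [← card_fin (κ i)]
  refine (card_bij (fun y _ => finSigmaFinEquiv ⟨i, y⟩) ?_ ?_ fun x hx => ?_).symm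
  · simp
  · simp
  · obtain ⟨⟨i', y⟩, rfl⟩ := finSigmaFinEquiv.surjective x
    obtain rfl : i' = i := by simpa using hx
    exact ⟨y, mem_univ y, rfl⟩

lemma comp_perm_mem_multislice (σ : Equiv.Perm (Fin n)) {u : Fin n → Fin ℓ} :
    u ∘ σ ∈ multislice ℓ n κ ↔ u ∈ multislice ℓ n κ := by
  have hcard (i : Fin ℓ) : #{j | u (σ j) = i} = #{j | u j = i} :=
    card_equiv σ (by simp)
  simp [mem_multislice, hcard]

lemma expect_comp_perm (σ : Equiv.Perm (Fin n)) (G : (Fin n → Fin ℓ) → ℝ) :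
    𝔼 u ∈ multislice ℓ n κ, G (u ∘ σ) = 𝔼 u ∈ multislice ℓ n κ, G u :=
  expect_equiv (σ.symm.arrowCongr (Equiv.refl _))
    (fun _ => (comp_perm_mem_multislice σ).symm) (fun _ _ => rfl)

lemma sum_apply_eq_sum_mul {u : Fin n → Fin ℓ} (hu : u ∈ multislice ℓ n κ) (v : Fin ℓ → ℝ) :
    ∑ m, v (u m) = ∑ b, κ b * v b := by
  rw [← sum_fiberwise (s := univ) (g := u)]
  refine sum_congr rfl fun b _ => ?_
  rw [← mem_multislice.mp hu b, ← nsmul_eq_mul, ← sum_const]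
  exact sum_congr rfl fun m hm => by rw [(mem_filter.mp hm).2]

lemma exists_eq_coordSum_of_degreeOne [NeZero n] {f : (Fin n → Fin ℓ) → ℝ}
    (hf : degreeOne ℓ n κ f) :
    ∃ w : Fin n → Fin ℓ → ℝ, ∀ u ∈ multislice ℓ n κ, f u = coordSum w u := by
  obtain ⟨c, coef, hf⟩ := hf
  refine ⟨fun j a => c / n + coef j a, fun u hu => ?_⟩
  have hn : (n : ℝ) ≠ 0 := NeZero.ne _
  simp [hf u hu, coordSum, xvar, sum_add_distrib, mul_div_cancel₀ _ hn]

end Exchangeability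

section Cylinder

variable {ℓ n : ℕ} {κ : Fin ℓ → ℕ} {δ : ℝ} {T : Finset (Fin n)} {w : Fin n → Fin ℓ}

/-- The elements of the multislice that agree with `w` on the coordinates in `T`. -/
def cylinder (κ : Fin ℓ → ℕ) (T : Finset (Fin n)) (w : Fin n → Fin ℓ) : Finset (Fin n → Fin ℓ) :=
  {u ∈ multislice ℓ n κ | ∀ x ∈ T, u x = w x}

lemma comp_swap_mem_cylinder {k m : Fin n} (hk : k ∉ T) (hm : m ∉ T) {u : Fin n → Fin ℓ}
    (hu : u ∈ cylinder κ T w) : u ∘ Equiv.swap k m ∈ cylinder κ T w := by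
  simp only [cylinder, mem_filter, comp_perm_mem_multislice] at hu ⊢
  refine ⟨hu.1, fun x hx => ?_⟩
  have hxk : x ≠ k := fun h => hk (h ▸ hx)
  have hxm : x ≠ m := fun h => hm (h ▸ hx)
  simp [Equiv.swap_apply_of_ne_of_ne hxk hxm, hu.2 x hx]

lemma card_filter_cylinder_le {k m : Fin n} (hk : k ∉ T) (hm : m ∉ T) :
    #{u ∈ cylinder κ T w | u m = w k} ≤ #(cylinder κ (insert k T) w) := by
  refine card_le_card_of_injOn (· ∘ Equiv.swap k m) (fun u hu => ?_)
    (Equiv.swap k m).surjective.injective_comp_right.injOn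
  obtain ⟨hu, hum⟩ := mem_filter.mp hu
  obtain ⟨hmem, hagree⟩ := mem_filter.mp (comp_swap_mem_cylinder hk hm hu)
  exact mem_filter.mpr ⟨hmem, by simpa [hum] using hagree⟩

lemma count_le_card_compl_filter_add_card {u : Fin n → Fin ℓ} (hu : u ∈ multislice ℓ n κ)
    (i : Fin ℓ) : κ i ≤ #{x ∈ Tᶜ | u x = i} + #T := by
  rw [← mem_multislice.mp hu i]
  refine (card_le_card fun x hx => ?_).trans (card_union_le _ _)
  simp only [mem_filter, mem_union, mem_compl, mem_univ, true_and] at hx ⊢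
  tauto

-- Double counting of the pairs `(u, m)` with `u` in the smaller cylinder, `m ∉ T`, `u m = w k`.
lemma mul_card_cylinder_le_card_cylinder_insert {k : Fin n} (hk : k ∉ T)
    (hκ : ∀ i, δ * n + #T ≤ κ i) :
    δ * #(cylinder κ T w) ≤ #(cylinder κ (insert k T) w) := by
  have hcount : #(cylinder κ T w) • (δ * n) ≤ #Tᶜ • (#(cylinder κ (insert k T) w) : ℝ) := by
    refine card_nsmul_le_card_nsmul (fun u m => u m = w k) (fun u hu => ?_) fun m hm => ?_
    · have hle := count_le_card_compl_filter_add_card (T := T) (mem_filter.mp hu).1 (w k)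
      have hle' : (κ (w k) : ℝ) ≤ #{x ∈ Tᶜ | u x = w k} + #T := mod_cast hle
      exact le_of_add_le_add_right ((hκ _).trans hle')
    · exact mod_cast card_filter_cylinder_le hk (mem_compl.mp hm)
  have hn : (0 : ℝ) < n := mod_cast k.pos
  have hTn : (#Tᶜ : ℝ) ≤ n := by simpa using (Nat.cast_le (α := ℝ)).2 (card_le_univ Tᶜ)
  refine le_of_mul_le_mul_right ?_ hn
  calc δ * #(cylinder κ T w) * n = #(cylinder κ T w) • (δ * n) := by rw [nsmul_eq_mul]; ring
    _ ≤ #Tᶜ • (#(cylinder κ (insert k T) w) : ℝ) := hcount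
    _ ≤ n * #(cylinder κ (insert k T) w) := by rw [nsmul_eq_mul]; gcongr
    _ = #(cylinder κ (insert k T) w) * n := mul_comm _ _

lemma pow_card_mul_card_multislice_le (hδ : 0 ≤ δ) (hκ : ∀ i, δ * n + #T ≤ κ i) :
    δ ^ #T * #(multislice ℓ n κ) ≤ #(cylinder κ T w) := by
  induction T using Finset.induction_on with
  | empty => simp [cylinder]
  | insert k T hk ih =>
    rw [card_insert_of_notMem hk] at hκ ⊢
    have hκ' (i : Fin ℓ) : δ * n + #T ≤ κ i := by
      have := hκ i
      push_cast at this
      linarith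
    calc δ ^ (#T + 1) * #(multislice ℓ n κ) = δ * (δ ^ #T * #(multislice ℓ n κ)) := by ring
      _ ≤ δ * #(cylinder κ T w) := by gcongr; exact ih hκ'
      _ ≤ #(cylinder κ (insert k T) w) := mul_card_cylinder_le_card_cylinder_insert hk hκ'

variable {G : (Fin n → Fin ℓ) → ℝ} {t : ℝ}

lemma pow_card_mul_le_expect (hne : (multislice ℓ n κ).Nonempty) (hδ : 0 ≤ δ)
    (hκ : ∀ i, δ * n + #T ≤ κ i) (hG : ∀ u ∈ multislice ℓ n κ, 0 ≤ G u) (ht : 0 ≤ t)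
    (hGt : ∀ u ∈ cylinder κ T w, t ≤ G u) :
    δ ^ #T * t ≤ 𝔼 u ∈ multislice ℓ n κ, G u := by
  have hcard : (0 : ℝ) < #(multislice ℓ n κ) := mod_cast hne.card_pos
  rw [expect_eq_sum_div_card, le_div_iff₀ hcard]
  calc δ ^ #T * t * #(multislice ℓ n κ) = δ ^ #T * #(multislice ℓ n κ) * t := by ring
    _ ≤ #(cylinder κ T w) * t := by gcongr; exact pow_card_mul_card_multislice_le hδ hκ
    _ = #(cylinder κ T w) • t := (nsmul_eq_mul _ _).symm
    _ ≤ ∑ u ∈ cylinder κ T w, G u := card_nsmul_le_sum _ _ _ hGt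
    _ ≤ ∑ u ∈ multislice ℓ n κ, G u :=
      sum_le_sum_of_subset_of_nonneg (filter_subset _ _) fun u hu _ => hG u hu

lemma exists_mem_cylinder_forall_comp_lt (hne : (multislice ℓ n κ).Nonempty) (hδ : 0 ≤ δ)
    (hκ : ∀ i, δ * n + #T ≤ κ i) (hG : ∀ u ∈ multislice ℓ n κ, 0 ≤ G u) (ht : 0 ≤ t)
    (s : Finset (Equiv.Perm (Fin n))) (hlt : #s * 𝔼 u ∈ multislice ℓ n κ, G u < δ ^ #T * t) :
    ∃ u ∈ cylinder κ T w, ∀ σ ∈ s, G (u ∘ σ) < t := by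
  have hG' (u) (hu : u ∈ multislice ℓ n κ) (σ : Equiv.Perm (Fin n)) : 0 ≤ G (u ∘ σ) :=
    hG _ ((comp_perm_mem_multislice σ).mpr hu)
  have hmean : 𝔼 u ∈ multislice ℓ n κ, ∑ σ ∈ s, G (u ∘ σ) = #s * 𝔼 u ∈ multislice ℓ n κ, G u := by
    simp only [expect_sum_comm, expect_comp_perm, sum_const, nsmul_eq_mul]
  obtain ⟨u, hu, hut⟩ : ∃ u ∈ cylinder κ T w, ∑ σ ∈ s, G (u ∘ σ) < t := by
    by_contra! hGt
    have := pow_card_mul_le_expect hne hδ hκ (fun u hu => sum_nonneg fun σ _ => hG' u hu σ) ht hGt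
    exact (hmean.trans_lt hlt).not_ge this
  refine ⟨u, hu, fun σ hσ => lt_of_le_of_lt ?_ hut⟩
  exact single_le_sum (fun σ _ => hG' u (mem_filter.mp hu).1 σ) hσ

end Cylinder

section DistanceToZeroOne

variable {x y d e g : ℝ}

lemma dist01_nonneg (x : ℝ) : 0 ≤ dist01 x := le_min (abs_nonneg _) (abs_nonneg _)

lemma dist01_lt_iff {r : ℝ} : dist01 x < r ↔ |x| < r ∨ |x - 1| < r := min_lt_iff

lemma dist01_le_add_abs_sub (x y : ℝ) : dist01 x ≤ dist01 y + |x - y| := by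
  rw [dist01, dist01, ← min_add_add_right]
  refine min_le_min ?_ ?_
  · simpa using abs_add_le y (x - y)
  · simpa using abs_add_le (y - 1) (x - y)

lemma exists_abs_sub_eq_dist01 (x : ℝ) : ∃ g : ℝ, (g = 0 ∨ g = 1) ∧ |x - g| = dist01 x := by
  obtain h | h := min_choice |x| |x - 1|
  · exact ⟨0, .inl rfl, by rw [sub_zero, dist01, h]⟩
  · exact ⟨1, .inr rfl, by rw [dist01, h]⟩

lemma dist01_eq_abs_sub (hg : g = 0 ∨ g = 1) (h : |x - g| ≤ 1 / 2) : dist01 x = |x - g| := by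
  rw [abs_le] at h
  obtain rfl | rfl := hg
  · rw [dist01, sub_zero, min_eq_left (sq_le_sq.mp (by linarith))]
  · rw [dist01, min_eq_right (sq_le_sq.mp (by linarith))]

-- If `g` is not the point of `{0, 1}` nearest to `x`, the quartic term dominates `(x - g) ^ 2`.
lemma sq_sub_le_dist01_sq_add (x : ℝ) (hg : g = 0 ∨ g = 1) :
    (x - g) ^ 2 ≤ dist01 x ^ 2 + 4 * (x - g) ^ 4 := by
  obtain h | h := le_total |x - g| (1 / 2)
  · rw [dist01_eq_abs_sub hg h, sq_abs]
    exact le_add_of_nonneg_right (by positivity)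
  · have hsq : 1 / 4 ≤ (x - g) ^ 2 := by
      rw [← sq_abs]
      linarith [pow_le_pow_left₀ (by norm_num) h 2]
    nlinarith [sq_nonneg (dist01 x)]

lemma sq_sub_le_dist01_sq_add_dist01_pow_four (x : ℝ) (hg : g = 0 ∨ g = 1)
    (hyg : |y - g| = dist01 y) :
    (x - g) ^ 2 ≤ dist01 x ^ 2 + 32 * ((x - y) ^ 4 + dist01 y ^ 4) := by
  have hpow : (x - g) ^ 4 ≤ 8 * ((x - y) ^ 4 + (y - g) ^ 4) := by
    rw [← sub_add_sub_cancel x y g]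
    exact (Even.add_pow_le (by decide)).trans_eq (by norm_num)
  rw [← hyg, Even.pow_abs (by decide)]
  linarith [sq_sub_le_dist01_sq_add x hg]

lemma sq_le_two_mul_dist01_sq_add_two (x : ℝ) : x ^ 2 ≤ 2 * dist01 x ^ 2 + 2 := by
  obtain ⟨g, hg, hxg⟩ := exists_abs_sub_eq_dist01 x
  rw [← hxg, sq_abs]
  obtain rfl | rfl := hg <;> nlinarith [sq_nonneg (x - 2)]

lemma abs_lt_or_le_abs_of_dist01_lt (hx : dist01 x < 1 / 32) (hd : dist01 (x - d) < 1 / 32) :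
    |d| < 1 / 8 ∨ 15 / 16 ≤ |d| := by
  rw [dist01_lt_iff] at hx hd
  grind

-- If both were large, `d` and `e` would be close to the same sign `±1`, determined by whether `x`
-- is close to `1` or to `0`; then `x - d - e` would be close to `-1` or `2`.
lemma abs_lt_or_abs_lt_of_dist01_lt (hx : dist01 x < 1 / 32) (hd : dist01 (x - d) < 1 / 32)
    (he : dist01 (x - e) < 1 / 32) (hde : dist01 (x - d - e) < 1 / 32) :
    |d| < 1 / 8 ∨ |e| < 1 / 8 := by
  rw [dist01_lt_iff] at hx hd he hde
  grind

/-- A Lipschitz threshold at `1 / 2`: it is locally constant near `0` and `1`, and approximates `x`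
within `dist01 x`. -/
def ramp (x : ℝ) : ℝ := max 0 (min 1 (2 * x - 1 / 2))

lemma abs_sub_ramp_le (x : ℝ) : |x - ramp x| ≤ dist01 x := by
  unfold ramp dist01
  grind

lemma abs_ramp_sub_ramp_le (x y : ℝ) : |ramp x - ramp y| ≤ 2 * |x - y| := by
  unfold ramp
  grind

lemma ramp_eq_ramp (hx : dist01 x < 1 / 8) (hxy : |x - y| < 1 / 8) : ramp x = ramp y := by
  rw [dist01_lt_iff] at hx
  unfold ramp
  grind

lemma mul_ramp_sub_ramp_le (x : ℝ) (hd : |d| < 1 / 8) :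
    d * (ramp x - ramp (x - d)) ≤ 128 * (d ^ 2 * dist01 x ^ 2) := by
  obtain hx | hx := lt_or_ge (dist01 x) (1 / 8)
  · rw [ramp_eq_ramp hx (y := x - d) (by simpa using hd), sub_self, mul_zero]
    positivity
  calc d * (ramp x - ramp (x - d)) ≤ |d| * |ramp x - ramp (x - d)| := by
        rw [← abs_mul]; exact le_abs_self _
    _ ≤ |d| * (2 * |d|) := by
        gcongr
        simpa using abs_ramp_sub_ramp_le x (x - d)
    _ = 128 * (d ^ 2 * (1 / 8) ^ 2) := by rw [← sq_abs d]; ring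
    _ ≤ 128 * (d ^ 2 * dist01 x ^ 2) := by gcongr

end DistanceToZeroOne

section CompleteMultipartite

variable {V : Type*} {Γ : SimpleGraph V}

lemma adj_or_adj_of_isCompleteMultipartite (hΓ : Γ.IsCompleteMultipartite) {a b : V} (r : V)
    (hab : Γ.Adj a b) : Γ.Adj a r ∨ Γ.Adj b r := by
  by_contra! h
  exact hΓ.trans a r b h.1 (fun hrb => h.2 hrb.symm) hab

variable [Fintype V]

-- An edge avoiding `j` would complete a triangle on `j, p, q`, and any edge from this triangle to a
-- fourth vertex misses one of its sides.
lemma eq_or_eq_of_adj_of_path (hV : 4 ≤ Fintype.card V) (hΓ : Γ.IsCompleteMultipartite)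
    (hmeet : ∀ ⦃a b c d⦄, Γ.Adj a b → Γ.Adj c d → a = c ∨ a = d ∨ b = c ∨ b = d)
    {j p q : V} (hpq : p ≠ q) (hjp : Γ.Adj j p) (hjq : Γ.Adj j q) {a b : V} (hab : Γ.Adj a b) :
    a = j ∨ b = j := by
  classical
  by_contra! hj
  have hpq_adj : Γ.Adj p q := by
    have := hmeet hjp hab
    have := hmeet hjq hab
    have := hab.symm
    grind
  obtain ⟨r, -, hr⟩ : ∃ r ∈ univ, r ∉ ({j, p, q} : Finset V) :=
    exists_mem_notMem_of_card_lt_card (card_le_three.trans_lt hV)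
  have hj_ne_p := hjp.ne
  have hj_ne_q := hjq.ne
  obtain h | h := adj_or_adj_of_isCompleteMultipartite hΓ r hjp
  · have := hmeet h hpq_adj
    grind
  · have := hmeet h hjq
    grind

lemma exists_forall_adj_eq_or_eq (hV : 4 ≤ Fintype.card V) (hΓ : Γ.IsCompleteMultipartite)
    (hmeet : ∀ ⦃a b c d⦄, Γ.Adj a b → Γ.Adj c d → a = c ∨ a = d ∨ b = c ∨ b = d) :
    ∃ j, ∀ ⦃a b⦄, Γ.Adj a b → a = j ∨ b = j := by
  classical
  by_cases hedge : ∃ k m, Γ.Adj k m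
  · obtain ⟨k, m, hkm⟩ := hedge
    obtain ⟨r, -, hr⟩ : ∃ r ∈ univ, r ∉ ({k, m} : Finset V) :=
      exists_mem_notMem_of_card_lt_card (card_le_two.trans_lt (lt_of_lt_of_le (by norm_num) hV))
    simp only [mem_insert, mem_singleton, not_or] at hr
    obtain h | h := adj_or_adj_of_isCompleteMultipartite hΓ r hkm
    · exact ⟨k, fun _ _ => eq_or_eq_of_adj_of_path hV hΓ hmeet (Ne.symm hr.2) hkm h⟩
    · exact ⟨m, fun _ _ => eq_or_eq_of_adj_of_path hV hΓ hmeet (Ne.symm hr.1) hkm.symm h⟩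
  · have : Nonempty V := Fintype.card_pos_iff.mp (by omega)
    exact ⟨Classical.arbitrary V, fun a b hab => absurd ⟨a, b, hab⟩ hedge⟩

end CompleteMultipartite

section Center

/-- Two coordinates are adjacent if transposing them can change `coordSum w` noticeably. -/
def influenceGraph {ι α : Type*} (w : ι → α → ℝ) : SimpleGraph ι where
  Adj k m := ∃ a b, 1 / 8 ≤ |swapDiff w k m a b|
  symm := ⟨fun k m ⟨a, b, h⟩ => ⟨b, a, by rwa [swapDiff_comm]⟩⟩
  loopless := ⟨fun k ⟨a, b, h⟩ => by norm_num [swapDiff_self] at h⟩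

variable {ℓ n : ℕ} {κ : Fin ℓ → ℕ} {δ : ℝ} {w : Fin n → Fin ℓ → ℝ}

lemma exists_dist01_swaps_lt (hne : (multislice ℓ n κ).Nonempty) (hδ : 0 ≤ δ)
    (hκ : ∀ i, δ * n + 4 ≤ κ i)
    (hε : 𝔼 u ∈ multislice ℓ n κ, dist01 (coordSum w u) ^ 2 < δ ^ 4 / 4096)
    {k k' m m' : Fin n} (hnodup : [k, k', m, m'].Nodup) (a b a' b' : Fin ℓ) :
    ∃ x, dist01 x < 1 / 32 ∧ dist01 (x - swapDiff w k k' a b) < 1 / 32 ∧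
      dist01 (x - swapDiff w m m' a' b') < 1 / 32 ∧
      dist01 (x - swapDiff w k k' a b - swapDiff w m m' a' b') < 1 / 32 := by
  let σ := Equiv.swap k k'
  let τ := Equiv.swap m m'
  let T := [k, k', m, m'].toFinset
  let pattern : Fin n → Fin ℓ := fun x => if x = k then a else if x = k' then b else
    if x = m then a' else b'
  have hT : #T = 4 := List.toFinset_card_of_nodup hnodup
  have hlt : #{1, σ, τ, σ * τ} * 𝔼 u ∈ multislice ℓ n κ, dist01 (coordSum w u) ^ 2
      < δ ^ #T * (1 / 32) ^ 2 := by
    have hcard : (#{1, σ, τ, σ * τ} : ℝ) ≤ 4 := mod_cast card_le_four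
    have hnonneg : 0 ≤ 𝔼 u ∈ multislice ℓ n κ, dist01 (coordSum w u) ^ 2 :=
      expect_nonneg fun u _ => sq_nonneg _
    rw [hT]
    linarith [mul_le_mul_of_nonneg_right hcard hnonneg]
  obtain ⟨u, hu, hdist⟩ := exists_mem_cylinder_forall_comp_lt (w := pattern) hne hδ
    (by simpa [hT] using hκ) (fun u _ => sq_nonneg _) (by positivity) _ hlt
  have hdist_lt (π : Equiv.Perm (Fin n)) (hπ : π ∈ ({1, σ, τ, σ * τ} : Finset _)) :
      dist01 (coordSum w (u ∘ π)) < 1 / 32 := lt_of_pow_lt_pow_left₀ 2 (by norm_num) (hdist π hπ)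
  have hpattern := (mem_filter.mp hu).2
  have hcolors : u k = a ∧ u k' = b ∧ u m = a' ∧ u m' = b' := by
    refine ⟨?_, ?_, ?_, ?_⟩ <;> rw [hpattern _ (by simp [T])] <;> simp [pattern] <;> grind
  obtain ⟨hk, hk', hm, hm'⟩ := hcolors
  have hσm : (u ∘ σ) m = a' := by
    rw [Function.comp_apply, Equiv.swap_apply_of_ne_of_ne, hm] <;> grind
  have hσm' : (u ∘ σ) m' = b' := by
    rw [Function.comp_apply, Equiv.swap_apply_of_ne_of_ne, hm'] <;> grind
  refine ⟨coordSum w u, hdist_lt 1 (by simp), ?_, ?_, ?_⟩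
  · simpa [σ, coordSum_comp_swap, hk, hk'] using hdist_lt σ (by simp)
  · simpa [τ, coordSum_comp_swap, hm, hm'] using hdist_lt τ (by simp)
  · have h := hdist_lt (σ * τ) (by simp)
    rwa [Equiv.Perm.coe_mul, ← Function.comp_assoc, coordSum_comp_swap, hσm, hσm',
      coordSum_comp_swap, hk, hk'] at h

lemma abs_swapDiff_lt_or_abs_swapDiff_lt (hne : (multislice ℓ n κ).Nonempty) (hδ : 0 ≤ δ)
    (hκ : ∀ i, δ * n + 4 ≤ κ i)
    (hε : 𝔼 u ∈ multislice ℓ n κ, dist01 (coordSum w u) ^ 2 < δ ^ 4 / 4096)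
    {k k' m m' : Fin n} (hnodup : [k, k', m, m'].Nodup) (a b a' b' : Fin ℓ) :
    |swapDiff w k k' a b| < 1 / 8 ∨ |swapDiff w m m' a' b'| < 1 / 8 := by
  obtain ⟨x, hx, hd, he, hde⟩ := exists_dist01_swaps_lt hne hδ hκ hε hnodup a b a' b'
  exact abs_lt_or_abs_lt_of_dist01_lt hx hd he hde

lemma abs_swapDiff_lt_or_le_abs_swapDiff (hne : (multislice ℓ n κ).Nonempty) (hδ : 0 ≤ δ)
    (hκ : ∀ i, δ * n + 4 ≤ κ i) (hn : 4 ≤ n)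
    (hε : 𝔼 u ∈ multislice ℓ n κ, dist01 (coordSum w u) ^ 2 < δ ^ 4 / 4096)
    {k m : Fin n} (hkm : k ≠ m) (a b : Fin ℓ) :
    |swapDiff w k m a b| < 1 / 8 ∨ 15 / 16 ≤ |swapDiff w k m a b| := by
  obtain ⟨s, hs, t, ht, hst⟩ : ∃ s ∈ ({k, m} : Finset _)ᶜ,
      ∃ t ∈ ({k, m} : Finset _)ᶜ, s ≠ t := by
    rw [← one_lt_card, card_compl, card_pair hkm, Fintype.card_fin]
    omega
  have hnodup : [k, m, s, t].Nodup := by simp at hs ht ⊢; grind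
  obtain ⟨x, hx, hd, -, -⟩ := exists_dist01_swaps_lt hne hδ hκ hε hnodup a b a b
  exact abs_lt_or_le_abs_of_dist01_lt hx hd

lemma isCompleteMultipartite_influenceGraph (hne : (multislice ℓ n κ).Nonempty) (hδ : 0 ≤ δ)
    (hκ : ∀ i, δ * n + 4 ≤ κ i) (hn : 4 ≤ n)
    (hε : 𝔼 u ∈ multislice ℓ n κ, dist01 (coordSum w u) ^ 2 < δ ^ 4 / 4096) :
    (influenceGraph w).IsCompleteMultipartite := by
  refine ⟨fun k r m hkr hrm hkm => ?_⟩
  obtain ⟨a, b, hab⟩ := id hkm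
  have hlarge : 15 / 16 ≤ |swapDiff w k m a b| :=
    (abs_swapDiff_lt_or_le_abs_swapDiff hne hδ hκ hn hε hkm.ne a b).resolve_left hab.not_gt
  have hk : |swapDiff w k r a b| < 1 / 8 := not_le.mp fun h => hkr ⟨a, b, h⟩
  have hm : |swapDiff w m r a b| < 1 / 8 := not_le.mp fun h => hrm (SimpleGraph.Adj.symm ⟨a, b, h⟩)
  rw [swapDiff_eq_sub w k m r] at hlarge
  linarith [abs_sub (swapDiff w k r a b) (swapDiff w m r a b)]

lemma exists_center (hne : (multislice ℓ n κ).Nonempty) (hδ : 0 ≤ δ)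
    (hκ : ∀ i, δ * n + 4 ≤ κ i) (hn : 4 ≤ n)
    (hε : 𝔼 u ∈ multislice ℓ n κ, dist01 (coordSum w u) ^ 2 < δ ^ 4 / 4096) :
    ∃ j, ∀ k ≠ j, ∀ m ≠ j, ∀ a b, |swapDiff w k m a b| < 1 / 8 := by
  have hmeet ⦃k k' m m'⦄ (hk : (influenceGraph w).Adj k k') (hm : (influenceGraph w).Adj m m') :
      k = m ∨ k = m' ∨ k' = m ∨ k' = m' := by
    by_contra! hdisjoint
    have hnodup : [k, k', m, m'].Nodup := by
      have := hk.ne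
      have := hm.ne
      simp [*]
    obtain ⟨a, b, hab⟩ := hk
    obtain ⟨a', b', hab'⟩ := hm
    exact (abs_swapDiff_lt_or_abs_swapDiff_lt hne hδ hκ hε hnodup a b a' b').elim
      hab.not_gt hab'.not_gt
  obtain ⟨j, hj⟩ := exists_forall_adj_eq_or_eq (by simpa using hn)
    (isCompleteMultipartite_influenceGraph hne hδ hκ hn hε) hmeet
  refine ⟨j, fun k hk m hm a b => ?_⟩
  by_contra! hab
  exact (hj ⟨a, b, hab⟩).elim hk hm

end Center

section Residual

variable {ℓ n : ℕ} {κ : Fin ℓ → ℕ} {δ ε : ℝ} {w : Fin n → Fin ℓ → ℝ} {j : Fin n}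

/-- The conditional mean of `coordSum w u` given `u j = a`: every other coordinate then has colour
`b` with probability `(κ b - [a = b]) / (n - 1)`. The formula is meaningful for `2 ≤ n`. -/
def condMean (κ : Fin ℓ → ℕ) (w : Fin n → Fin ℓ → ℝ) (j : Fin n) (a : Fin ℓ) : ℝ :=
  w j a + (∑ k ∈ univ.erase j, (∑ b, κ b * w k b - w k a)) / (n - 1)

/-- The part of `coordSum w` not explained by the coordinate `j`. -/
def residual (κ : Fin ℓ → ℕ) (w : Fin n → Fin ℓ → ℝ) (j : Fin n) (u : Fin n → Fin ℓ) : ℝ :=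
  coordSum w u - condMean κ w j (u j)

lemma residual_comp_swap {k m : Fin n} (hk : k ≠ j) (hm : m ≠ j) (u : Fin n → Fin ℓ) :
    residual κ w j (u ∘ Equiv.swap k m) = residual κ w j u - swapDiff w k m (u k) (u m) := by
  rw [residual, residual, coordSum_comp_swap, Function.comp_apply,
    Equiv.swap_apply_of_ne_of_ne hk.symm hm.symm]
  ring

-- The residual is an eigenfunction of the random transposition walk on the coordinates `≠ j`.
lemma sum_sum_swapDiff_eq_mul_residual (hn : 2 ≤ n) {u : Fin n → Fin ℓ}
    (hu : u ∈ multislice ℓ n κ) :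
    ∑ k ∈ univ.erase j, ∑ m ∈ univ.erase j, swapDiff w k m (u k) (u m) =
      2 * (n - 1) * residual κ w j u := by
  have hn' : (n - 1 : ℝ) ≠ 0 := by
    have : (2 : ℝ) ≤ n := mod_cast hn
    linarith
  have hcard : (#(univ.erase j) : ℝ) = n - 1 := by
    rw [card_erase_of_mem (mem_univ j), card_univ, Fintype.card_fin, Nat.cast_pred (by omega)]
  have hinner (k : Fin n) :
      ∑ m ∈ univ.erase j, w k (u m) = ∑ b, κ b * w k b - w k (u j) := by
    rw [sum_erase_eq_sub (mem_univ j), sum_apply_eq_sum_mul hu (w k)]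
  have hcoordSum : coordSum w u = w j (u j) + ∑ k ∈ univ.erase j, w k (u k) :=
    (add_sum_erase _ _ (mem_univ j)).symm
  simp only [sum_sum_swapDiff, hcard, hinner, residual, hcoordSum, condMean]
  field_simp
  ring

lemma two_mul_expect_swapDiff_mul (k m : Fin n) (ψ : (Fin n → Fin ℓ) → ℝ) :
    2 * 𝔼 u ∈ multislice ℓ n κ, swapDiff w k m (u k) (u m) * ψ u =
      𝔼 u ∈ multislice ℓ n κ,
        swapDiff w k m (u k) (u m) * (ψ u - ψ (u ∘ Equiv.swap k m)) := by
  have hswap : 𝔼 u ∈ multislice ℓ n κ, swapDiff w k m (u k) (u m) * ψ (u ∘ Equiv.swap k m) =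
      -𝔼 u ∈ multislice ℓ n κ, swapDiff w k m (u k) (u m) * ψ u := by
    rw [← expect_comp_perm (Equiv.swap k m), ← expect_neg_distrib]
    refine expect_congr rfl fun u _ => ?_
    have hu : (u ∘ Equiv.swap k m) ∘ Equiv.swap k m = u := by ext; simp
    rw [hu, Function.comp_apply, Function.comp_apply, Equiv.swap_apply_left,
      Equiv.swap_apply_right, swapDiff_swap_colors, neg_mul]
  simp only [mul_sub, expect_sub_distrib, hswap]
  ring

lemma four_mul_expect_residual_mul (hn : 2 ≤ n) (ψ : (Fin n → Fin ℓ) → ℝ) :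
    4 * (n - 1) * 𝔼 u ∈ multislice ℓ n κ, residual κ w j u * ψ u =
      ∑ k ∈ univ.erase j, ∑ m ∈ univ.erase j, 𝔼 u ∈ multislice ℓ n κ,
        swapDiff w k m (u k) (u m) * (ψ u - ψ (u ∘ Equiv.swap k m)) := by
  simp only [← two_mul_expect_swapDiff_mul, ← mul_sum, ← expect_sum_comm]
  rw [mul_expect, mul_expect]
  refine expect_congr rfl fun u hu => ?_
  simp only [← sum_mul]
  rw [sum_sum_swapDiff_eq_mul_residual hn hu]
  ring

lemma expect_residual_mul_apply_eq_zero (hn : 2 ≤ n) (g : Fin ℓ → ℝ) :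
    𝔼 u ∈ multislice ℓ n κ, residual κ w j u * g (u j) = 0 := by
  have hn' : (0 : ℝ) < 4 * (n - 1) := by
    have : (2 : ℝ) ≤ n := mod_cast hn
    linarith
  refine (mul_eq_zero.mp ?_).resolve_left hn'.ne'
  rw [four_mul_expect_residual_mul hn fun u => g (u j)]
  refine sum_eq_zero fun k hk => sum_eq_zero fun m hm => expect_eq_zero fun u _ => ?_
  rw [Function.comp_apply, Equiv.swap_apply_of_ne_of_ne (ne_of_mem_erase hk).symm
    (ne_of_mem_erase hm).symm, sub_self, mul_zero]

lemma four_mul_expect_residual_sq (hn : 2 ≤ n) :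
    4 * (n - 1) * 𝔼 u ∈ multislice ℓ n κ, residual κ w j u ^ 2 =
      ∑ k ∈ univ.erase j, ∑ m ∈ univ.erase j, 𝔼 u ∈ multislice ℓ n κ,
        swapDiff w k m (u k) (u m) ^ 2 := by
  simp only [sq (residual κ w j _)]
  rw [four_mul_expect_residual_mul hn]
  refine sum_congr rfl fun k hk => sum_congr rfl fun m hm => expect_congr rfl fun u _ => ?_
  rw [residual_comp_swap (ne_of_mem_erase hk) (ne_of_mem_erase hm), sub_sub_cancel, sq]

lemma sq_mul_expect_swapDiff_sq_mul_le (hne : (multislice ℓ n κ).Nonempty) (hδ : 0 ≤ δ)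
    (hκ : ∀ i, δ * n + 2 ≤ κ i) (k m : Fin n) {G : (Fin n → Fin ℓ) → ℝ}
    (hG : ∀ u ∈ multislice ℓ n κ, 0 ≤ G u) :
    δ ^ 2 * 𝔼 u ∈ multislice ℓ n κ, swapDiff w k m (u k) (u m) ^ 2 * G u ≤
      (𝔼 u ∈ multislice ℓ n κ, swapDiff w k m (u k) (u m) ^ 2) *
        𝔼 u ∈ multislice ℓ n κ, G u := by
  obtain rfl | hkm := eq_or_ne k m
  · simp [swapDiff_self]
  rw [mul_expect, mul_expect]
  refine expect_le_expect fun u hu => ?_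
  rw [← mul_assoc]
  refine mul_le_mul_of_nonneg_right ?_ (hG u hu)
  have hinfluence := pow_card_mul_le_expect (T := {k, m}) (w := u)
    (G := fun v => swapDiff w k m (v k) (v m) ^ 2) (t := swapDiff w k m (u k) (u m) ^ 2)
    hne hδ (by simpa [card_pair hkm] using hκ) (fun _ _ => sq_nonneg _) (sq_nonneg _)
    fun v hv => by
      have hvu := (mem_filter.mp hv).2
      rw [hvu k (by simp), hvu m (by simp)]
  rwa [card_pair hkm] at hinfluence

lemma sq_mul_expect_residual_mul_le (hne : (multislice ℓ n κ).Nonempty) (hδ : 0 ≤ δ) (hn : 2 ≤ n)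
    (hκ : ∀ i, δ * n + 2 ≤ κ i) {ψ G : (Fin n → Fin ℓ) → ℝ}
    (hG : ∀ u ∈ multislice ℓ n κ, 0 ≤ G u)
    (hψ : ∀ k ≠ j, ∀ m ≠ j,
      𝔼 u ∈ multislice ℓ n κ, swapDiff w k m (u k) (u m) * (ψ u - ψ (u ∘ Equiv.swap k m)) ≤
        𝔼 u ∈ multislice ℓ n κ, swapDiff w k m (u k) (u m) ^ 2 * G u) :
    δ ^ 2 * 𝔼 u ∈ multislice ℓ n κ, residual κ w j u * ψ u ≤
      (𝔼 u ∈ multislice ℓ n κ, residual κ w j u ^ 2) * 𝔼 u ∈ multislice ℓ n κ, G u := by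
  have hn' : (0 : ℝ) < 4 * (n - 1) := by
    have : (2 : ℝ) ≤ n := mod_cast hn
    linarith
  refine le_of_mul_le_mul_left ?_ hn'
  rw [mul_left_comm, ← mul_assoc (4 * ((n : ℝ) - 1)), four_mul_expect_residual_mul hn,
    four_mul_expect_residual_sq hn]
  simp only [mul_sum, sum_mul]
  refine sum_le_sum fun k hk => sum_le_sum fun m hm => ?_
  exact (mul_le_mul_of_nonneg_left (hψ k (ne_of_mem_erase hk) m (ne_of_mem_erase hm))
    (sq_nonneg δ)).trans (sq_mul_expect_swapDiff_sq_mul_le hne hδ hκ k m hG)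

lemma expect_residual_mul_coordSum (hn : 2 ≤ n) :
    𝔼 u ∈ multislice ℓ n κ, residual κ w j u * coordSum w u =
      𝔼 u ∈ multislice ℓ n κ, residual κ w j u ^ 2 := by
  have hsplit (u : Fin n → Fin ℓ) : residual κ w j u * coordSum w u =
      residual κ w j u ^ 2 + residual κ w j u * condMean κ w j (u j) := by
    unfold residual; ring
  simp only [hsplit, expect_add_distrib, expect_residual_mul_apply_eq_zero hn, add_zero]

-- Testing the residual against `ramp ∘ coordSum w`: this is within `dist01` of `coordSum w` itself,
-- but a transposition avoiding `j` only changes it where `dist01 (coordSum w u)` is not small.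
lemma expect_residual_sq_le (hne : (multislice ℓ n κ).Nonempty) (hδ : 0 < δ) (hn : 2 ≤ n)
    (hκ : ∀ i, δ * n + 2 ≤ κ i)
    (hj : ∀ k ≠ j, ∀ m ≠ j, ∀ a b, |swapDiff w k m a b| < 1 / 8)
    (hdist : 𝔼 u ∈ multislice ℓ n κ, dist01 (coordSum w u) ^ 2 ≤ ε) (hε : ε ≤ δ ^ 2 / 512) :
    𝔼 u ∈ multislice ℓ n κ, residual κ w j u ^ 2 ≤ 2 * ε := by
  set V := 𝔼 u ∈ multislice ℓ n κ, residual κ w j u ^ 2 with hV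
  have hV_nonneg : 0 ≤ V := expect_nonneg fun u _ => sq_nonneg _
  have hupper : δ ^ 2 * 𝔼 u ∈ multislice ℓ n κ, residual κ w j u * ramp (coordSum w u) ≤
      V * 𝔼 u ∈ multislice ℓ n κ, 128 * dist01 (coordSum w u) ^ 2 := by
    refine sq_mul_expect_residual_mul_le hne hδ.le hn hκ (fun u _ => by positivity)
      fun k hk m hm => expect_le_expect fun u _ => ?_
    rw [coordSum_comp_swap, mul_left_comm]
    exact mul_ramp_sub_ramp_le _ (hj k hk m hm _ _)
  have hlower : V / 2 - ε / 2 ≤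
      𝔼 u ∈ multislice ℓ n κ, residual κ w j u * ramp (coordSum w u) := by
    have hpoint (u : Fin n → Fin ℓ) :
        residual κ w j u * coordSum w u - (residual κ w j u ^ 2 + dist01 (coordSum w u) ^ 2) / 2 ≤
          residual κ w j u * ramp (coordSum w u) := by
      have hsq := sq_le_sq.mpr ((abs_sub_ramp_le (coordSum w u)).trans (le_abs_self _))
      nlinarith [sq_nonneg (residual κ w j u - (coordSum w u - ramp (coordSum w u)))]
    have := expect_le_expect fun u (_ : u ∈ multislice ℓ n κ) => hpoint u
    rw [expect_sub_distrib, expect_residual_mul_coordSum hn, ← expect_div, expect_add_distrib,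
      ← hV] at this
    linarith
  have hquarter : 𝔼 u ∈ multislice ℓ n κ, residual κ w j u * ramp (coordSum w u) ≤ V / 4 := by
    refine le_of_mul_le_mul_left (hupper.trans ?_) (pow_pos hδ 2)
    rw [← mul_expect]
    nlinarith
  linarith

lemma sq_mul_expect_residual_pow_four_le (hne : (multislice ℓ n κ).Nonempty) (hδ : 0 ≤ δ)
    (hn : 2 ≤ n) (hκ : ∀ i, δ * n + 2 ≤ κ i) :
    δ ^ 2 * 𝔼 u ∈ multislice ℓ n κ, residual κ w j u ^ 4 ≤
      3 * (𝔼 u ∈ multislice ℓ n κ, residual κ w j u ^ 2) ^ 2 := by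
  have hbound := sq_mul_expect_residual_mul_le (w := w) (j := j)
    (ψ := fun u => residual κ w j u ^ 3) (G := fun u => 3 * residual κ w j u ^ 2)
    hne hδ hn hκ (fun u _ => by positivity) fun k hk m hm => ?_
  · simp only [← mul_expect, ← pow_succ'] at hbound
    linarith
  let D (u : Fin n → Fin ℓ) : ℝ := swapDiff w k m (u k) (u m)
  have hsymm : 𝔼 u ∈ multislice ℓ n κ, D u ^ 2 * residual κ w j (u ∘ Equiv.swap k m) ^ 2 =
      𝔼 u ∈ multislice ℓ n κ, D u ^ 2 * residual κ w j u ^ 2 := by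
    rw [← expect_comp_perm (Equiv.swap k m) fun u => D u ^ 2 * residual κ w j u ^ 2]
    refine expect_congr rfl fun u _ => ?_
    simp only [D, Function.comp_apply, Equiv.swap_apply_left, Equiv.swap_apply_right]
    rw [swapDiff_swap_colors, neg_sq]
  calc 𝔼 u ∈ multislice ℓ n κ,
        D u * (residual κ w j u ^ 3 - residual κ w j (u ∘ Equiv.swap k m) ^ 3)
      ≤ 𝔼 u ∈ multislice ℓ n κ, 3 / 2 * (D u ^ 2 * residual κ w j u ^ 2 +
          D u ^ 2 * residual κ w j (u ∘ Equiv.swap k m) ^ 2) := by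
        refine expect_le_expect fun u _ => ?_
        rw [residual_comp_swap hk hm]
        nlinarith [sq_nonneg (D u ^ 2)]
    _ = 𝔼 u ∈ multislice ℓ n κ, D u ^ 2 * (3 * residual κ w j u ^ 2) := by
        rw [← mul_expect, expect_add_distrib, hsymm]
        simp only [mul_left_comm _ (3 : ℝ), ← mul_expect]
        ring

lemma mul_dist01_condMean_sq_le (hne : (multislice ℓ n κ).Nonempty) (hδ : 0 ≤ δ)
    (hκ : ∀ i, δ * n + 1 ≤ κ i) (a : Fin ℓ) :
    δ * dist01 (condMean κ w j a) ^ 2 ≤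
      2 * (𝔼 u ∈ multislice ℓ n κ, dist01 (coordSum w u) ^ 2 +
        𝔼 u ∈ multislice ℓ n κ, residual κ w j u ^ 2) := by
  have hpoint (u : Fin n → Fin ℓ) : dist01 (condMean κ w j (u j)) ^ 2 ≤
      2 * (dist01 (coordSum w u) ^ 2 + residual κ w j u ^ 2) := by
    have hle := dist01_le_add_abs_sub (condMean κ w j (u j)) (coordSum w u)
    rw [abs_sub_comm] at hle
    calc dist01 (condMean κ w j (u j)) ^ 2
        ≤ (dist01 (coordSum w u) + |residual κ w j u|) ^ 2 :=
          pow_le_pow_left₀ (dist01_nonneg _) hle 2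
      _ ≤ 2 * (dist01 (coordSum w u) ^ 2 + |residual κ w j u| ^ 2) := add_sq_le
      _ = _ := by rw [sq_abs]
  rw [← expect_add_distrib, mul_expect]
  calc δ * dist01 (condMean κ w j a) ^ 2 = δ ^ #{j} * dist01 (condMean κ w j a) ^ 2 := by simp
    _ ≤ _ := pow_card_mul_le_expect (w := fun _ => a) hne hδ (by simpa using hκ)
        (fun u _ => by positivity) (sq_nonneg _) fun u hu => ?_
  have ha : u j = a := (mem_filter.mp hu).2 j (mem_singleton_self j)
  exact ha ▸ hpoint u

lemma exists_expect_coordSum_sub_sq_le (hne : (multislice ℓ n κ).Nonempty) (hδ : 0 < δ)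
    (hn : 2 ≤ n) (hκ : ∀ i, δ * n + 2 ≤ κ i)
    (hj : ∀ k ≠ j, ∀ m ≠ j, ∀ a b, |swapDiff w k m a b| < 1 / 8)
    (hdist : 𝔼 u ∈ multislice ℓ n κ, dist01 (coordSum w u) ^ 2 ≤ ε) (hε : ε ≤ δ ^ 2 / 512) :
    ∃ r : Fin ℓ → ℝ, (∀ a, r a = 0 ∨ r a = 1) ∧
      𝔼 u ∈ multislice ℓ n κ, (coordSum w u - r (u j)) ^ 2 ≤ ε + 1536 / δ ^ 2 * ε ^ 2 := by
  choose r hr hround using fun a => exists_abs_sub_eq_dist01 (condMean κ w j a)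
  refine ⟨r, hr, ?_⟩
  have hV := expect_residual_sq_le hne hδ hn hκ hj hdist hε
  have hfourth : 𝔼 u ∈ multislice ℓ n κ, residual κ w j u ^ 4 ≤ 12 * ε ^ 2 / δ ^ 2 := by
    rw [le_div_iff₀' (pow_pos hδ 2)]
    calc _ ≤ _ := sq_mul_expect_residual_pow_four_le hne hδ.le hn hκ
      _ ≤ 3 * (2 * ε) ^ 2 := by gcongr
      _ = 12 * ε ^ 2 := by ring
  have hmean (a : Fin ℓ) : dist01 (condMean κ w j a) ^ 4 ≤ 36 * ε ^ 2 / δ ^ 2 := by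
    have hsq : dist01 (condMean κ w j a) ^ 2 ≤ 6 * ε / δ := by
      rw [le_div_iff₀' hδ]
      have := mul_dist01_condMean_sq_le (w := w) (j := j) hne hδ.le (fun i => by linarith [hκ i]) a
      linarith
    calc dist01 (condMean κ w j a) ^ 4 = (dist01 (condMean κ w j a) ^ 2) ^ 2 := by ring
      _ ≤ (6 * ε / δ) ^ 2 := by gcongr
      _ = 36 * ε ^ 2 / δ ^ 2 := by ring
  calc 𝔼 u ∈ multislice ℓ n κ, (coordSum w u - r (u j)) ^ 2
      ≤ 𝔼 u ∈ multislice ℓ n κ, (dist01 (coordSum w u) ^ 2 +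
          32 * (residual κ w j u ^ 4 + 36 * ε ^ 2 / δ ^ 2)) := by
        refine expect_le_expect fun u _ => ?_
        unfold residual
        linarith [sq_sub_le_dist01_sq_add_dist01_pow_four (coordSum w u) (hr (u j)) (hround (u j)),
          hmean (u j)]
    _ = 𝔼 u ∈ multislice ℓ n κ, dist01 (coordSum w u) ^ 2 +
          32 * (𝔼 u ∈ multislice ℓ n κ, residual κ w j u ^ 4 + 36 * ε ^ 2 / δ ^ 2) := by
        simp only [expect_add_distrib, ← mul_expect, expect_const hne]
    _ ≤ ε + 32 * (12 * ε ^ 2 / δ ^ 2 + 36 * ε ^ 2 / δ ^ 2) := by gcongr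
    _ = ε + 1536 / δ ^ 2 * ε ^ 2 := by ring

end Residual

section DegreeOne

variable {ℓ n : ℕ} {κ : Fin ℓ → ℕ} {δ ε θ : ℝ} {f : (Fin n → Fin ℓ) → ℝ}

lemma msExp_sq_le (hne : (multislice ℓ n κ).Nonempty) (f : (Fin n → Fin ℓ) → ℝ) :
    msExp ℓ n κ (fun u => f u ^ 2) ≤ 2 * msExp ℓ n κ (fun u => dist01 (f u) ^ 2) + 2 := by
  rw [msExp_eq_expect, msExp_eq_expect, mul_expect, ← expect_const hne (2 : ℝ),
    ← expect_add_distrib, expect_const hne]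
  exact expect_le_expect fun u _ => sq_le_two_mul_dist01_sq_add_two (f u)

lemma exists_dictator_of_expect_dist01_lt (hne : (multislice ℓ n κ).Nonempty) (hδ : 0 < δ)
    (hδ1 : δ ≤ 1) (hn : 4 ≤ n) (hκ : ∀ i, δ * n + 4 ≤ κ i) (hf : degreeOne ℓ n κ f)
    (hε : msExp ℓ n κ (fun u => dist01 (f u) ^ 2) = ε) (hlt : ε < δ ^ 4 / 4096) :
    ∃ g : (Fin n → Fin ℓ) → ℝ, booleanOn ℓ n κ g ∧ dictator ℓ n κ g ∧
      msExp ℓ n κ (fun u => (f u - g u) ^ 2) ≤ ε + 1536 / δ ^ 2 * ε ^ 2 := by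
  have : NeZero n := ⟨by omega⟩
  obtain ⟨w, hw⟩ := exists_eq_coordSum_of_degreeOne hf
  have hdist : 𝔼 u ∈ multislice ℓ n κ, dist01 (coordSum w u) ^ 2 = ε := by
    rw [← hε, msExp_eq_expect]
    exact expect_congr rfl fun u hu => by rw [hw u hu]
  have hε_le : ε ≤ δ ^ 2 / 512 := by
    have := pow_le_pow_of_le_one hδ.le hδ1 (show 2 ≤ 4 by norm_num)
    linarith [pow_pos hδ 2]
  obtain ⟨j, hj⟩ := exists_center (w := w) hne hδ.le hκ hn (hdist.trans_lt hlt)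
  obtain ⟨r, hr, hle⟩ := exists_expect_coordSum_sub_sq_le hne hδ (by omega)
    (fun i => by linarith [hκ i]) hj hdist.le hε_le
  refine ⟨fun u => r (u j), fun u _ => hr _, ⟨j, fun _ _ _ _ huv => congrArg r huv⟩, ?_⟩
  rw [msExp_eq_expect]
  refine le_of_eq_of_le (expect_congr rfl fun u hu => ?_) hle
  rw [hw u hu]

lemma two_mul_add_two_le (hθ : 0 < θ) (hθ1 : θ ≤ 1) (hε : θ ≤ ε) :
    2 * ε + 2 ≤ ε + 3 / θ ^ 2 * ε ^ 2 := by
  have hratio : 1 ≤ ε / θ := (one_le_div hθ).mpr hε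
  have hle : ε ≤ ε / θ := le_div_self (hθ.le.trans hε) hθ hθ1
  calc 2 * ε + 2 ≤ ε + 3 * (ε / θ) ^ 2 := by nlinarith
    _ = ε + 3 / θ ^ 2 * ε ^ 2 := by ring

lemma exists_dictator_of_le_expect_dist01 (hne : (multislice ℓ n κ).Nonempty) (hn : 0 < n)
    (hθ : 0 < θ) (hθ1 : θ ≤ 1) (hε : msExp ℓ n κ (fun u => dist01 (f u) ^ 2) = ε) (hle : θ ≤ ε) :
    ∃ g : (Fin n → Fin ℓ) → ℝ, booleanOn ℓ n κ g ∧ dictator ℓ n κ g ∧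
      msExp ℓ n κ (fun u => (f u - g u) ^ 2) ≤ ε + 3 / θ ^ 2 * ε ^ 2 := by
  refine ⟨0, fun _ _ => .inl rfl, ⟨⟨0, hn⟩, fun _ _ _ _ _ => rfl⟩, ?_⟩
  simp only [Pi.zero_apply, sub_zero]
  exact (msExp_sq_le hne f).trans (hε ▸ two_mul_add_two_le hθ hθ1 (hε ▸ hle))

lemma mul_add_four_le_of_balanced {ρ : ℝ} (hρ : 0 < ρ) (hδ : δ ≤ ρ / 2) (hn : ⌈8 / ρ⌉₊ ≤ n)
    {c : ℝ} (hc : ρ * n ≤ c) : δ * n + 4 ≤ c := by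
  have hn' : 8 / ρ ≤ n := Nat.ceil_le.mp hn
  rw [div_le_iff₀' hρ] at hn'
  have := mul_le_mul_of_nonneg_right hδ n.cast_nonneg
  linarith

end DegreeOne

end Multislice

/-- **FKN theorem for the multislice, sharp form.**  If `f` is a degree-one function on a
`ρ`-balanced multislice with `E[dist(f,{0,1})²] = ε`, then `f` is `(ε + Cε²)`-close to a
Boolean dictator. -/
theorem fkn_multislice_sharp (ℓ : ℕ) (hℓ : 2 ≤ ℓ) (ρ : ℝ) (hρ : 0 < ρ) :
    ∃ (N : ℕ) (C : ℝ), ∀ n : ℕ, N ≤ n → ∀ κ : Fin ℓ → ℕ,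
      (∀ i, 0 < κ i) → (∀ i, ρ * n ≤ (κ i : ℝ)) → (∑ i, κ i = n) →
      ∀ f : (Fin n → Fin ℓ) → ℝ, degreeOne ℓ n κ f →
      ∀ ε : ℝ, msExp ℓ n κ (fun u => dist01 (f u) ^ 2) = ε →
      ∃ g : (Fin n → Fin ℓ) → ℝ, booleanOn ℓ n κ g ∧ dictator ℓ n κ g ∧
        msExp ℓ n κ (fun u => (f u - g u) ^ 2) ≤ ε + C * ε ^ 2 := by
  obtain ⟨δ, hδ, hδ1, hδρ⟩ : ∃ δ : ℝ, 0 < δ ∧ δ ≤ 1 ∧ δ ≤ ρ / 2 :=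
    ⟨min 1 (ρ / 2), by positivity, min_le_left _ _, min_le_right _ _⟩
  let θ := δ ^ 4 / 4096
  have hθ : 0 < θ := by positivity
  have hθ1 : θ ≤ 1 := (div_le_self (by positivity) (by norm_num)).trans (pow_le_one₀ hδ.le hδ1)
  refine ⟨max 4 ⌈8 / ρ⌉₊, 1536 / δ ^ 2 + 3 / θ ^ 2, fun n hn κ _ hκ hsum f hf ε hε => ?_⟩
  obtain ⟨hn4, hnρ⟩ := max_le_iff.mp hn
  have hne := Multislice.multislice_nonempty hsum
  have hκδ (i : Fin ℓ) : δ * n + 4 ≤ κ i :=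
    Multislice.mul_add_four_le_of_balanced hρ hδρ hnρ (hκ i)
  obtain hlt | hle := lt_or_ge ε θ
  · obtain ⟨g, hg, hg', hfg⟩ :=
      Multislice.exists_dictator_of_expect_dist01_lt hne hδ hδ1 hn4 hκδ hf hε hlt
    exact ⟨g, hg, hg', hfg.trans (by gcongr; exact le_add_of_nonneg_right (by positivity))⟩
  · obtain ⟨g, hg, hg', hfg⟩ :=
      Multislice.exists_dictator_of_le_expect_dist01 hne (by omega) hθ hθ1 hε hle
    exact ⟨g, hg, hg', hfg.trans (by gcongr; exact le_add_of_nonneg_left (by positivity))⟩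
end
end

section
/- Fix an integer ℓ ≥ 2 and a parameter ρ > 0. There exist constants N = N(ℓ,ρ) and C = C(ℓ,ρ) such that the following holds. Let κ_1,…,κ_ℓ be positive integers with κ_i ≥ ρn for all i, summing to n ≥ N. If F : M_κ → {0,1} satisfies ‖F^{>1}‖² = ε, then there exists a Boolean function g : M_κ → {0,1} depending on at most one coordinate such that Pr[F ≠ g] ≤ 4ε + Cε². -/
open Finset

noncomputable section

/-
Exchanging the entries of `u` along a set of disjoint pairs of coordinates changes a linear form by
a sum of swap differences, which behave like independent random signs. If the linear form is close
to a Boolean function, then of two disjoint groups of pairs taken from one matching at least one has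
small weight, so in every matching nearly all the weight sits on a single pair. Averaging over a
Latin square of matchings, all rows of the coefficient matrix but one are nearly equal up to
additive constants, that is, the linear form is close in `L²` to a function of one coordinate.
Rounding that function gives `g`. Since `p - g` again has degree one, hypercontractivity turns
`‖p - g‖² = O(ε)` into `‖p - g‖₄⁴ = O(ε²)`, and so the probability that `F ≠ g` exceeds `4ε` only by
`O(ε²)`.
-/

section Expectation

variable {ℓ n : ℕ} {κ : Fin ℓ → ℕ} {f g : (Fin n → Fin ℓ) → ℝ} {u : Fin n → Fin ℓ}

lemma mem_multislice : u ∈ multislice ℓ n κ ↔ ∀ i, #{j | u j = i} = κ i := by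
  simp [multislice]

lemma multislice_nonempty (hsum : ∑ i, κ i = n) : (multislice ℓ n κ).Nonempty := by
  subst hsum
  refine ⟨fun j ↦ (finSigmaFinEquiv.symm j).1, mem_multislice.2 fun i ↦ ?_⟩
  rw [card_equiv finSigmaFinEquiv.symm (t := univ.sigma fun i' ↦ if i' = i then univ else ∅)
    fun j ↦ by by_cases h : (finSigmaFinEquiv.symm j).1 = i <;> simp [h], card_sigma]
  simp [apply_ite card]

lemma sum_comp_of_mem_multislice {M : Type*} [AddCommMonoid M] (hu : u ∈ multislice ℓ n κ)
    (φ : Fin ℓ → M) : ∑ j, φ (u j) = ∑ a, κ a • φ a := by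
  rw [← sum_fiberwise' univ u φ]
  exact sum_congr rfl fun a _ ↦ by rw [sum_const, mem_multislice.1 hu a]

lemma comp_perm_mem_multislice (π : Equiv.Perm (Fin n)) :
    u ∘ π ∈ multislice ℓ n κ ↔ u ∈ multislice ℓ n κ := by
  simp only [mem_multislice]
  refine forall_congr' fun i ↦ ?_
  rw [card_equiv (s := {j | (u ∘ π) j = i}) (t := {j | u j = i}) π fun j ↦ by simp]

lemma msExp_congr (h : ∀ u ∈ multislice ℓ n κ, f u = g u) : msExp ℓ n κ f = msExp ℓ n κ g := by
  rw [msExp, msExp, sum_congr rfl h]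

lemma msExp_mono (h : ∀ u ∈ multislice ℓ n κ, f u ≤ g u) : msExp ℓ n κ f ≤ msExp ℓ n κ g :=
  div_le_div_of_nonneg_right (sum_le_sum h) (Nat.cast_nonneg _)

lemma msExp_nonneg (h : ∀ u ∈ multislice ℓ n κ, 0 ≤ f u) : 0 ≤ msExp ℓ n κ f :=
  div_nonneg (sum_nonneg h) (Nat.cast_nonneg _)

lemma msExp_add (f g : (Fin n → Fin ℓ) → ℝ) :
    msExp ℓ n κ (fun u ↦ f u + g u) = msExp ℓ n κ f + msExp ℓ n κ g := by
  rw [msExp, sum_add_distrib, add_div, ← msExp, ← msExp]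

lemma msExp_const_mul (a : ℝ) (f : (Fin n → Fin ℓ) → ℝ) :
    msExp ℓ n κ (fun u ↦ a * f u) = a * msExp ℓ n κ f := by
  rw [msExp, ← mul_sum, mul_div_assoc, ← msExp]

lemma msExp_sum {ι : Type*} (s : Finset ι) (f : ι → (Fin n → Fin ℓ) → ℝ) :
    msExp ℓ n κ (fun u ↦ ∑ i ∈ s, f i u) = ∑ i ∈ s, msExp ℓ n κ (f i) := by
  rw [msExp, sum_comm, sum_div]
  rfl

lemma msExp_const (hne : (multislice ℓ n κ).Nonempty) (a : ℝ) : msExp ℓ n κ (fun _ ↦ a) = a := by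
  have hcard : (#(multislice ℓ n κ) : ℝ) ≠ 0 := by exact_mod_cast hne.card_ne_zero
  rw [msExp, sum_const, nsmul_eq_mul, mul_div_cancel_left₀ _ hcard]

lemma msExp_comp_perm (π : Equiv.Perm (Fin n)) (f : (Fin n → Fin ℓ) → ℝ) :
    msExp ℓ n κ (fun u ↦ f (u ∘ π)) = msExp ℓ n κ f := by
  rw [msExp, msExp]
  congr 1
  exact sum_equiv (π.symm.arrowCongr (.refl _)) (fun u ↦ (comp_perm_mem_multislice π).symm)
    fun u _ ↦ rfl

lemma two_mul_msExp_mul_of_comp_perm_eq_neg {π : Equiv.Perm (Fin n)} (hf : ∀ u, f (u ∘ π) = -f u)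
    (g : (Fin n → Fin ℓ) → ℝ) :
    2 * msExp ℓ n κ (fun u ↦ f u * g u) = msExp ℓ n κ fun u ↦ f u * (g u - g (u ∘ π)) := by
  have hneg : msExp ℓ n κ (fun u ↦ f u * g u) = msExp ℓ n κ fun u ↦ -1 * (f u * g (u ∘ π)) := by
    rw [← msExp_comp_perm π]
    exact msExp_congr fun u _ ↦ by rw [hf]; ring
  rw [two_mul]
  nth_rw 2 [hneg]
  rw [← msExp_add]
  exact msExp_congr fun u _ ↦ by ring

lemma sub_mul_cube_sub_cube_le (x y : ℝ) :
    (y - x) * (y ^ 3 - x ^ 3) ≤ 3 / 2 * ((y - x) ^ 2 * (x ^ 2 + y ^ 2)) := by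
  have h : 0 ≤ (y - x) ^ 2 * (y - x) ^ 2 := by positivity
  linear_combination h / 2

lemma msExp_sub_mul_cube_sub_cube_le (π : Equiv.Perm (Fin n)) {W : ℝ} (hg : ∀ u, 0 ≤ g u)
    (hgπ : ∀ u, g (u ∘ π) = g u) (hfW : ∀ u, (f (u ∘ π) - f u) ^ 2 ≤ W) :
    msExp ℓ n κ (fun u ↦ (f (u ∘ π) - f u) * (f (u ∘ π) ^ 3 - f u ^ 3) * g u) ≤
      3 * W * msExp ℓ n κ (fun u ↦ f u ^ 2 * g u) := by
  calc msExp ℓ n κ (fun u ↦ (f (u ∘ π) - f u) * (f (u ∘ π) ^ 3 - f u ^ 3) * g u)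
      ≤ msExp ℓ n κ fun u ↦
          3 / 2 * W * (f u ^ 2 * g u) + 3 / 2 * W * (f (u ∘ π) ^ 2 * g (u ∘ π)) :=
        msExp_mono fun u _ ↦ by
          have h₁ := mul_le_mul_of_nonneg_right (sub_mul_cube_sub_cube_le (f u) (f (u ∘ π))) (hg u)
          have h₂ := mul_le_mul_of_nonneg_right (hfW u)
            (mul_nonneg (add_nonneg (sq_nonneg (f u)) (sq_nonneg (f (u ∘ π)))) (hg u))
          rw [hgπ]
          linarith
    _ = 3 * W * msExp ℓ n κ (fun u ↦ f u ^ 2 * g u) := by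
        rw [msExp_add, msExp_const_mul, msExp_const_mul,
          msExp_comp_perm π fun u ↦ f u ^ 2 * g u]
        ring

end Expectation

section Conditioning

variable {ℓ n : ℕ} {κ : Fin ℓ → ℕ} {θ : ℝ}

lemma sum_compl_ite_eq_ge {u : Fin n → Fin ℓ} (hu : u ∈ multislice ℓ n κ) (J : Finset (Fin n))
    (a : Fin ℓ) : (κ a : ℝ) - #J ≤ ∑ k ∈ Jᶜ, if u k = a then (1 : ℝ) else 0 := by
  have htotal : ∑ k, (if u k = a then (1 : ℝ) else 0) = κ a := by
    simp [sum_comp_of_mem_multislice hu fun b ↦ if b = a then (1 : ℝ) else 0]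
  have hJ : ∑ k ∈ J, (if u k = a then (1 : ℝ) else 0) ≤ #J := by
    simpa using sum_le_sum fun k (_ : k ∈ J) ↦ (by split_ifs <;> norm_num :
      (if u k = a then (1 : ℝ) else 0) ≤ 1)
  linarith [sum_add_sum_compl J fun k ↦ if u k = a then (1 : ℝ) else 0]

/- By symmetry the expectation on the right is the same for every coordinate outside `J`, and at
least `κ a - #J` of those coordinates carry the colour `a`. -/
lemma mul_msExp_le_msExp_mul_ite {J : Finset (Fin n)} {G : (Fin n → Fin ℓ) → ℝ} {j : Fin n}
    {a : Fin ℓ} (hκ : θ * n + #J ≤ κ a) (hj : j ∉ J) (hG₀ : ∀ u, 0 ≤ G u) (hG : DependsOn G J) :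
    θ * msExp ℓ n κ G ≤ msExp ℓ n κ fun u ↦ G u * if u j = a then 1 else 0 := by
  set A := msExp ℓ n κ fun u ↦ G u * if u j = a then (1 : ℝ) else 0
  have hA : 0 ≤ A := msExp_nonneg fun u _ ↦ mul_nonneg (hG₀ u) (by split_ifs <;> norm_num)
  have hswap : ∀ k ∈ Jᶜ, msExp ℓ n κ (fun u ↦ G u * if u k = a then (1 : ℝ) else 0) = A := by
    intro k hk
    rw [← msExp_comp_perm (Equiv.swap j k)]
    refine msExp_congr fun u _ ↦ ?_
    have hGu : G (u ∘ Equiv.swap j k) = G u := hG fun i hi ↦ by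
      rw [Function.comp_apply, Equiv.swap_apply_of_ne_of_ne (ne_of_mem_of_not_mem hi hj)
        (ne_of_mem_of_not_mem hi (mem_compl.1 hk))]
    simp [hGu]
  have hsum : θ * n * msExp ℓ n κ G ≤ #Jᶜ * A := by
    calc θ * n * msExp ℓ n κ G
        ≤ msExp ℓ n κ fun u ↦ ∑ k ∈ Jᶜ, G u * if u k = a then (1 : ℝ) else 0 := by
          rw [← msExp_const_mul]
          refine msExp_mono fun u hu ↦ ?_
          rw [← mul_sum, mul_comm]
          exact mul_le_mul_of_nonneg_left (by linarith [sum_compl_ite_eq_ge hu J a]) (hG₀ u)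
      _ = #Jᶜ * A := by rw [msExp_sum, sum_congr rfl hswap, sum_const, nsmul_eq_mul]
  have hcard : (#Jᶜ : ℝ) ≤ n := by exact_mod_cast card_finset_fin_le Jᶜ
  refine le_of_mul_le_mul_left (a := (n : ℝ)) ?_ (by exact_mod_cast j.pos)
  linarith [mul_le_mul_of_nonneg_right hcard hA]

end Conditioning

section Swap

variable {α ι : Type*}

/-- The change of `∑ j, c j (u j)` when the entries of `u` at `j` and `k` are exchanged. -/
def swapDiff (c : ι → α → ℝ) (j k : ι) (u : ι → α) : ℝ :=
  c j (u k) + c k (u j) - c j (u j) - c k (u k)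

lemma swapDiff_self (c : ι → α → ℝ) (j : ι) (u : ι → α) : swapDiff c j j u = 0 := by
  rw [swapDiff]; ring

lemma swapDiff_comp_swap [DecidableEq ι] (c : ι → α → ℝ) (j k : ι) (u : ι → α) :
    swapDiff c j k (u ∘ Equiv.swap j k) = -swapDiff c j k u := by
  simp only [swapDiff, Function.comp_apply, Equiv.swap_apply_left, Equiv.swap_apply_right]
  ring

lemma swapDiff_comp_swap_of_ne_of_ne [DecidableEq ι] (c : ι → α → ℝ) {j k s t : ι} (hsj : s ≠ j)
    (hsk : s ≠ k) (htj : t ≠ j) (htk : t ≠ k) (u : ι → α) :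
    swapDiff c s t (u ∘ Equiv.swap j k) = swapDiff c s t u := by
  simp only [swapDiff, Function.comp_apply, Equiv.swap_apply_of_ne_of_ne hsj hsk,
    Equiv.swap_apply_of_ne_of_ne htj htk]

/-- The linear form `u ↦ ∑ j, c j (u j)`: in the notation `x_{ja}` of the indicator variables it is
`∑ j, ∑ a, c j a * x_{ja}`. -/
def linForm [Fintype ι] (c : ι → α → ℝ) (u : ι → α) : ℝ := ∑ j, c j (u j)

lemma linForm_comp_swap [Fintype ι] [DecidableEq ι] (c : ι → α → ℝ) (j k : ι) (u : ι → α) :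
    linForm c (u ∘ Equiv.swap j k) = linForm c u + swapDiff c j k u := by
  obtain rfl | hjk := eq_or_ne j k
  · simp [swapDiff_self]
  have h := Fintype.sum_eq_add (f := fun i ↦ c i (u (Equiv.swap j k i)) - c i (u i)) j k hjk
    fun i hi ↦ by rw [Equiv.swap_apply_of_ne_of_ne hi.1 hi.2, sub_self]
  rw [sum_sub_distrib, Equiv.swap_apply_left, Equiv.swap_apply_right] at h
  simp only [linForm, swapDiff, Function.comp_apply]
  linarith

end Swap

section Spread

variable {α ι : Type*} [Fintype α]

/-- The total squared oscillation `∑ a, ∑ b, (v a - v b) ^ 2` of a vector: a quadratic form whose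
kernel consists of the constant vectors. -/
def spread (v : α → ℝ) : ℝ := ∑ a, ∑ b, (v a - v b) ^ 2

lemma spread_nonneg (v : α → ℝ) : 0 ≤ spread v := by unfold spread; positivity

lemma spread_zero : spread (0 : α → ℝ) = 0 := by simp [spread]

lemma spread_sub_comm (v w : α → ℝ) : spread (v - w) = spread (w - v) := by
  simp only [spread, Pi.sub_apply]
  exact sum_congr rfl fun a _ ↦ sum_congr rfl fun b _ ↦ by ring

lemma sq_sub_le_spread (v : α → ℝ) (a b : α) : (v a - v b) ^ 2 ≤ spread v :=
  calc (v a - v b) ^ 2 ≤ ∑ b, (v a - v b) ^ 2 :=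
        single_le_sum (f := fun b ↦ (v a - v b) ^ 2) (fun _ _ ↦ sq_nonneg _) (mem_univ b)
    _ ≤ spread v := single_le_sum (f := fun a ↦ ∑ b, (v a - v b) ^ 2)
        (fun _ _ ↦ sum_nonneg fun _ _ ↦ sq_nonneg _) (mem_univ a)

lemma spread_sub_le (v w : α → ℝ) : spread (v - w) ≤ 2 * spread v + 2 * spread w := by
  simp only [spread, mul_sum, ← sum_add_distrib, Pi.sub_apply]
  gcongr with a _ b _
  linarith [sq_nonneg (v a - v b + (w a - w b))]

/-- A symmetric function satisfying the axioms of a squared (pseudo)distance, the triangle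
inequality being relaxed to `ω i k ≤ 2 * (ω i j + ω j k)`. -/
structure IsSqDist (ω : ι → ι → ℝ) : Prop where
  nonneg : ∀ i j, 0 ≤ ω i j
  self : ∀ i, ω i i = 0
  comm : ∀ i j, ω i j = ω j i
  le_two_mul_add : ∀ i j k, ω i k ≤ 2 * (ω i j + ω j k)

/-- The squared distance between the rows `c j` and `c k` of a coefficient matrix, rows being
considered up to additive constants. -/
def rowDist (c : ι → α → ℝ) (j k : ι) : ℝ := spread (c j - c k)

lemma isSqDist_rowDist (c : ι → α → ℝ) : IsSqDist (rowDist c) where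
  nonneg _ _ := spread_nonneg _
  self i := by rw [rowDist, sub_self, spread_zero]
  comm _ _ := spread_sub_comm _ _
  le_two_mul_add i j k := by
    have h := spread_sub_le (c i - c j) (c k - c j)
    rw [sub_sub_sub_cancel_right, spread_sub_comm (c k)] at h
    rw [mul_add]
    exact h

lemma sq_swapDiff_le (c : ι → α → ℝ) (j k : ι) (u : ι → α) :
    swapDiff c j k u ^ 2 ≤ rowDist c j k := by
  refine le_of_eq_of_le ?_ (sq_sub_le_spread (c j - c k) (u k) (u j))
  simp only [swapDiff, Pi.sub_apply]
  ring

lemma sq_swapDiff_eq_sum [DecidableEq α] (c : ι → α → ℝ) (j k : ι) (u : ι → α) :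
    swapDiff c j k u ^ 2 = ∑ a, ∑ b, ((c j - c k) a - (c j - c k) b) ^ 2 *
      ((if u j = a then 1 else 0) * if u k = b then 1 else 0) := by
  simp only [mul_ite, mul_one, mul_zero, sum_ite_eq, mem_univ, if_true, swapDiff, Pi.sub_apply]
  ring

end Spread

section SwapLowerBound

variable {ℓ n : ℕ} {κ : Fin ℓ → ℕ} {θ : ℝ} {j k : Fin n} {J : Finset (Fin n)}
  {G : (Fin n → Fin ℓ) → ℝ}

lemma sq_mul_msExp_le_msExp_mul_ite_mul_ite (hθ : 0 ≤ θ) (hκ : ∀ a, θ * n + (#J + 1) ≤ κ a)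
    (hjk : j ≠ k) (hj : j ∉ J) (hk : k ∉ J) (hG₀ : ∀ u, 0 ≤ G u) (hG : DependsOn G J)
    (a b : Fin ℓ) :
    θ ^ 2 * msExp ℓ n κ G ≤
      msExp ℓ n κ fun u ↦ G u * ((if u j = a then 1 else 0) * if u k = b then 1 else 0) := by
  have hcard : #(insert j J) = #J + 1 := card_insert_of_notMem hj
  have h₁ := mul_msExp_le_msExp_mul_ite (by linarith [hκ a]) hj hG₀ hG (θ := θ) (a := a)
  have h₂ := mul_msExp_le_msExp_mul_ite (θ := θ) (κ := κ) (J := insert j J) (j := k) (a := b)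
    (G := fun u ↦ G u * if u j = a then 1 else 0) (by rw [hcard]; exact_mod_cast hκ b)
    (by simp [hk, hjk.symm]) (fun u ↦ mul_nonneg (hG₀ u) (by split_ifs <;> norm_num))
    fun u v huv ↦ by
      simp only [hG fun i hi ↦ huv i (by simp [mem_coe.1 hi]), huv j (by simp)]
  simp only [mul_assoc] at h₂
  calc θ ^ 2 * msExp ℓ n κ G = θ * (θ * msExp ℓ n κ G) := by ring
    _ ≤ _ := (mul_le_mul_of_nonneg_left h₁ hθ).trans h₂

lemma sq_mul_rowDist_mul_msExp_le (hθ : 0 ≤ θ) (hκ : ∀ a, θ * n + (#J + 1) ≤ κ a) (hjk : j ≠ k)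
    (hj : j ∉ J) (hk : k ∉ J) (hG₀ : ∀ u, 0 ≤ G u) (hG : DependsOn G J) (c : Fin n → Fin ℓ → ℝ) :
    θ ^ 2 * rowDist c j k * msExp ℓ n κ G ≤ msExp ℓ n κ fun u ↦ G u * swapDiff c j k u ^ 2 := by
  set v := c j - c k
  calc θ ^ 2 * rowDist c j k * msExp ℓ n κ G
      = ∑ a, ∑ b, (v a - v b) ^ 2 * (θ ^ 2 * msExp ℓ n κ G) := by
        simp_rw [rowDist, spread, ← sum_mul]
        ring
    _ ≤ ∑ a, ∑ b, (v a - v b) ^ 2 * msExp ℓ n κ fun u ↦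
          G u * ((if u j = a then 1 else 0) * if u k = b then 1 else 0) := by
        gcongr with a _ b _
        exact sq_mul_msExp_le_msExp_mul_ite_mul_ite hθ hκ hjk hj hk hG₀ hG a b
    _ = msExp ℓ n κ fun u ↦ G u * swapDiff c j k u ^ 2 := by
        simp_rw [← msExp_const_mul, ← msExp_sum, sq_swapDiff_eq_sum, mul_sum]
        exact msExp_congr fun u _ ↦ sum_congr rfl fun a _ ↦ sum_congr rfl fun b _ ↦ by ring

lemma sq_mul_rowDist_le_msExp_sq_swapDiff (hne : (multislice ℓ n κ).Nonempty) (hθ : 0 ≤ θ)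
    (hκ : ∀ a, θ * n + 1 ≤ κ a) (c : Fin n → Fin ℓ → ℝ) (j k : Fin n) :
    θ ^ 2 * rowDist c j k ≤ msExp ℓ n κ fun u ↦ swapDiff c j k u ^ 2 := by
  obtain rfl | hjk := eq_or_ne j k
  · simpa [(isSqDist_rowDist c).self] using msExp_nonneg fun u _ ↦ sq_nonneg (swapDiff c j j u)
  · have h := sq_mul_rowDist_mul_msExp_le (J := ∅) (G := fun _ ↦ 1) hθ (by simpa using hκ) hjk
      (notMem_empty j) (notMem_empty k) (fun _ ↦ zero_le_one) (fun _ _ _ ↦ rfl) c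
    simpa only [msExp_const hne, mul_one, one_mul] using h

end SwapLowerBound

section Moments

variable {ℓ n : ℕ} {κ : Fin ℓ → ℕ} {θ : ℝ}

/-- The mean of the linear form `linForm c` on the multislice. -/
def linMean (κ : Fin ℓ → ℕ) (c : Fin n → Fin ℓ → ℝ) : ℝ := (∑ j, ∑ a, κ a * c j a) / n

/-- A linear form minus its mean on the multislice. -/
def centeredForm (κ : Fin ℓ → ℕ) (c : Fin n → Fin ℓ → ℝ) (u : Fin n → Fin ℓ) : ℝ :=
  linForm c u - linMean κ c

lemma centeredForm_comp_swap (c : Fin n → Fin ℓ → ℝ) (j k : Fin n) (u : Fin n → Fin ℓ) :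
    centeredForm κ c (u ∘ Equiv.swap j k) = centeredForm κ c u + swapDiff c j k u := by
  rw [centeredForm, centeredForm, linForm_comp_swap]
  ring

lemma sum_sum_swapDiff {u : Fin n → Fin ℓ} (hu : u ∈ multislice ℓ n κ) (c : Fin n → Fin ℓ → ℝ) :
    ∑ j, ∑ k, swapDiff c j k u = -(2 * n * centeredForm κ c u) := by
  have hmean : ∑ j, ∑ k, c j (u k) = n * linMean κ c := by
    rw [linMean, mul_div_cancel_of_imp' fun hn ↦ by obtain rfl := Nat.cast_eq_zero.1 hn; simp]
    exact sum_congr rfl fun j _ ↦ by simp [sum_comp_of_mem_multislice hu (c j)]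
  have hmean' : ∑ j, ∑ k, c k (u j) = n * linMean κ c := by rw [sum_comm, hmean]
  simp only [swapDiff, sum_sub_distrib, sum_add_distrib, hmean, hmean', sum_const, card_univ,
    Fintype.card_fin, nsmul_eq_mul, ← mul_sum, centeredForm, linForm]
  ring

/- Integration by parts: `centeredForm` is the average of the swap differences, and each of these
changes sign under its own swap. -/
lemma mul_msExp_centeredForm_mul (c : Fin n → Fin ℓ → ℝ) (φ : (Fin n → Fin ℓ) → ℝ) :
    4 * n * msExp ℓ n κ (fun u ↦ centeredForm κ c u * φ u) =
      ∑ j, ∑ k, msExp ℓ n κ fun u ↦ swapDiff c j k u * (φ (u ∘ Equiv.swap j k) - φ u) := by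
  have hswap (j k) : msExp ℓ n κ (fun u ↦ swapDiff c j k u * (φ (u ∘ Equiv.swap j k) - φ u)) =
      -2 * msExp ℓ n κ fun u ↦ swapDiff c j k u * φ u := by
    rw [neg_mul, two_mul_msExp_mul_of_comp_perm_eq_neg (swapDiff_comp_swap c j k), ← neg_one_mul,
      ← msExp_const_mul]
    exact msExp_congr fun u _ ↦ by ring
  simp_rw [hswap, ← mul_sum, ← msExp_sum, ← sum_mul]
  rw [msExp_congr fun u hu ↦ congrArg (· * φ u) (sum_sum_swapDiff hu c), ← msExp_const_mul,
    ← msExp_const_mul]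
  exact msExp_congr fun u _ ↦ by ring

lemma msExp_centeredForm (hn : 0 < n) (c : Fin n → Fin ℓ → ℝ) :
    msExp ℓ n κ (centeredForm κ c) = 0 := by
  have h := mul_msExp_centeredForm_mul (κ := κ) c fun _ ↦ 1
  have hzero : msExp ℓ n κ (fun _ ↦ 0) = 0 := by simp [msExp]
  simp only [sub_self, mul_zero, mul_one, hzero, sum_const_zero] at h
  exact (mul_eq_zero.1 h).resolve_left (by positivity)

lemma mul_msExp_sq_centeredForm (c : Fin n → Fin ℓ → ℝ) :
    4 * n * msExp ℓ n κ (fun u ↦ centeredForm κ c u ^ 2) =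
      ∑ j, ∑ k, msExp ℓ n κ fun u ↦ swapDiff c j k u ^ 2 := by
  simpa only [centeredForm_comp_swap, add_sub_cancel_left, ← sq] using
    mul_msExp_centeredForm_mul (κ := κ) c (centeredForm κ c)

lemma mul_msExp_sq_centeredForm_le (hne : (multislice ℓ n κ).Nonempty) (c : Fin n → Fin ℓ → ℝ) :
    4 * n * msExp ℓ n κ (fun u ↦ centeredForm κ c u ^ 2) ≤ ∑ j, ∑ k, rowDist c j k := by
  rw [mul_msExp_sq_centeredForm]
  gcongr with j _ k _
  exact (msExp_mono fun u _ ↦ sq_swapDiff_le c j k u).trans_eq (msExp_const hne _)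

lemma sq_mul_sum_rowDist_le (hne : (multislice ℓ n κ).Nonempty) (hθ : 0 ≤ θ)
    (hκ : ∀ a, θ * n + 1 ≤ κ a) (c : Fin n → Fin ℓ → ℝ) :
    θ ^ 2 * ∑ j, ∑ k, rowDist c j k ≤ 4 * n * msExp ℓ n κ (fun u ↦ centeredForm κ c u ^ 2) := by
  rw [mul_msExp_sq_centeredForm, mul_sum]
  simp only [mul_sum]
  gcongr with j _ k _
  exact sq_mul_rowDist_le_msExp_sq_swapDiff hne hθ hκ c j k

lemma mul_msExp_centeredForm_pow_four_le (c : Fin n → Fin ℓ → ℝ) :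
    4 * n * msExp ℓ n κ (fun u ↦ centeredForm κ c u ^ 4) ≤
      3 * (∑ j, ∑ k, rowDist c j k) * msExp ℓ n κ (fun u ↦ centeredForm κ c u ^ 2) := by
  have hparts := mul_msExp_centeredForm_mul (κ := κ) c fun u ↦ centeredForm κ c u ^ 3
  simp only [← pow_succ'] at hparts
  rw [hparts]
  simp only [mul_sum, sum_mul]
  gcongr with j _ k _
  have h := msExp_sub_mul_cube_sub_cube_le (κ := κ) (f := centeredForm κ c) (g := fun _ ↦ 1)
    (Equiv.swap j k) (fun _ ↦ zero_le_one) (fun _ ↦ rfl) fun u ↦ by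
      rw [centeredForm_comp_swap, add_sub_cancel_left]
      exact sq_swapDiff_le c j k u
  simpa only [mul_one, centeredForm_comp_swap, add_sub_cancel_left] using h

lemma sq_mul_msExp_centeredForm_pow_four_le (hne : (multislice ℓ n κ).Nonempty) (hn : 0 < n)
    (hθ : 0 ≤ θ) (hκ : ∀ a, θ * n + 1 ≤ κ a) (c : Fin n → Fin ℓ → ℝ) :
    θ ^ 2 * msExp ℓ n κ (fun u ↦ centeredForm κ c u ^ 4) ≤
      3 * msExp ℓ n κ (fun u ↦ centeredForm κ c u ^ 2) ^ 2 := by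
  have hlower := sq_mul_sum_rowDist_le hne hθ hκ c
  have hfour := mul_msExp_centeredForm_pow_four_le (κ := κ) c
  have hB : 0 ≤ msExp ℓ n κ (fun u ↦ centeredForm κ c u ^ 2) := msExp_nonneg fun u _ ↦ sq_nonneg _
  set A := msExp ℓ n κ fun u ↦ centeredForm κ c u ^ 4
  set B := msExp ℓ n κ fun u ↦ centeredForm κ c u ^ 2
  refine le_of_mul_le_mul_left (a := 4 * (n : ℝ)) ?_ (by positivity)
  calc 4 * n * (θ ^ 2 * A) = θ ^ 2 * (4 * n * A) := by ring
    _ ≤ θ ^ 2 * (3 * (∑ j, ∑ k, rowDist c j k) * B) := by gcongr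
    _ = 3 * B * (θ ^ 2 * ∑ j, ∑ k, rowDist c j k) := by ring
    _ ≤ 3 * B * (4 * n * B) := by gcongr
    _ = 4 * n * (3 * B ^ 2) := by ring

lemma le_one_of_mul_le (hne : (multislice ℓ n κ).Nonempty) (hn : 0 < n)
    (hκ : ∀ a, θ * n ≤ κ a) : θ ≤ 1 := by
  obtain ⟨u, hu⟩ := hne
  have hle : κ (u ⟨0, hn⟩) ≤ n :=
    (mem_multislice.1 hu (u ⟨0, hn⟩)).symm.trans_le (card_finset_fin_le _)
  refine le_of_mul_le_mul_right ?_ (Nat.cast_pos.2 hn : (0 : ℝ) < n)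
  rw [one_mul]
  exact (hκ _).trans (by exact_mod_cast hle)

lemma degreeOne.exists_eq_linForm {f : (Fin n → Fin ℓ) → ℝ} (hf : degreeOne ℓ n κ f)
    (hn : 0 < n) : ∃ c, ∀ u ∈ multislice ℓ n κ, f u = linForm c u := by
  obtain ⟨c₀, c, hc⟩ := hf
  refine ⟨fun j a ↦ c j a + c₀ / n, fun u hu ↦ ?_⟩
  have hn' : (n : ℝ) ≠ 0 := by positivity
  simp [hc u hu, linForm, xvar, sum_add_distrib, mul_div_cancel₀ _ hn', add_comm]

lemma degreeOne.sq_mul_msExp_pow_four_le {f : (Fin n → Fin ℓ) → ℝ} (hf : degreeOne ℓ n κ f)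
    (hne : (multislice ℓ n κ).Nonempty) (hn : 0 < n) (hθ : 0 ≤ θ) (hκ : ∀ a, θ * n + 1 ≤ κ a) :
    θ ^ 2 * msExp ℓ n κ (fun u ↦ f u ^ 4) ≤ 24 * msExp ℓ n κ (fun u ↦ f u ^ 2) ^ 2 := by
  obtain ⟨c, hc⟩ := hf.exists_eq_linForm hn
  have hfour := sq_mul_msExp_centeredForm_pow_four_le hne hn hθ hκ c
  have hB : 0 ≤ msExp ℓ n κ (fun u ↦ centeredForm κ c u ^ 2) := msExp_nonneg fun u _ ↦ sq_nonneg _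
  set A := msExp ℓ n κ fun u ↦ centeredForm κ c u ^ 4
  set B := msExp ℓ n κ fun u ↦ centeredForm κ c u ^ 2
  set μ := linMean κ c with hμ
  have hf_eq : ∀ u ∈ multislice ℓ n κ, f u = μ + centeredForm κ c u := fun u hu ↦ by
    rw [hc u hu, centeredForm, ← hμ, add_sub_cancel]
  have hsq : msExp ℓ n κ (fun u ↦ f u ^ 2) = μ ^ 2 + B := by
    calc msExp ℓ n κ (fun u ↦ f u ^ 2)
        = msExp ℓ n κ fun u ↦ μ ^ 2 + 2 * μ * centeredForm κ c u + centeredForm κ c u ^ 2 :=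
          msExp_congr fun u hu ↦ by rw [hf_eq u hu]; ring
      _ = μ ^ 2 + B := by
          rw [msExp_add, msExp_add, msExp_const_mul, msExp_const hne, msExp_centeredForm hn,
            mul_zero, add_zero]
  have hpow : msExp ℓ n κ (fun u ↦ f u ^ 4) ≤ 8 * (μ ^ 4 + A) := by
    calc msExp ℓ n κ (fun u ↦ f u ^ 4)
        ≤ msExp ℓ n κ fun u ↦ 8 * (μ ^ 4 + centeredForm κ c u ^ 4) := msExp_mono fun u hu ↦ by
          rw [hf_eq u hu]
          exact (Even.add_pow_le (by decide)).trans_eq (by norm_num)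
      _ = 8 * (μ ^ 4 + A) := by rw [msExp_const_mul, msExp_add, msExp_const hne]
  have hθ₁ : θ ^ 2 ≤ 1 :=
    pow_le_one₀ hθ (le_one_of_mul_le hne hn fun a ↦ by linarith [hκ a])
  calc θ ^ 2 * msExp ℓ n κ (fun u ↦ f u ^ 4) ≤ θ ^ 2 * (8 * (μ ^ 4 + A)) := by gcongr
    _ = 8 * (θ ^ 2 * μ ^ 4) + 8 * (θ ^ 2 * A) := by ring
    _ ≤ 8 * (1 * μ ^ 4) + 8 * (3 * B ^ 2) := by gcongr
    _ ≤ 24 * (μ ^ 2 + B) ^ 2 := by nlinarith [mul_nonneg (sq_nonneg μ) hB, sq_nonneg (μ ^ 2)]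
    _ = 24 * msExp ℓ n κ (fun u ↦ f u ^ 2) ^ 2 := by rw [hsq]

lemma msExp_sq_centeredForm_le_sum_spread (hne : (multislice ℓ n κ).Nonempty) (hn : 0 < n)
    (c : Fin n → Fin ℓ → ℝ) :
    msExp ℓ n κ (fun u ↦ centeredForm κ c u ^ 2) ≤ ∑ j, spread (c j) := by
  refine le_of_mul_le_mul_left (a := 4 * (n : ℝ)) ?_ (by positivity)
  calc 4 * n * msExp ℓ n κ (fun u ↦ centeredForm κ c u ^ 2)
      ≤ ∑ j, ∑ k, rowDist c j k := mul_msExp_sq_centeredForm_le hne c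
    _ ≤ ∑ j, ∑ k, (2 * spread (c j) + 2 * spread (c k)) := by
        gcongr with j _ k _
        exact spread_sub_le (c j) (c k)
    _ = 4 * n * ∑ j, spread (c j) := by
        simp only [sum_add_distrib, sum_const, card_univ, Fintype.card_fin, nsmul_eq_mul, ← mul_sum]
        ring

/- If all rows but `c i` are close to `v`, then up to a constant `linForm c u` is close to
`(c i - v) (u i)`, because `∑ j, v (u j)` is constant on the multislice. -/
lemma exists_msExp_sq_linForm_sub_le (hne : (multislice ℓ n κ).Nonempty) (c : Fin n → Fin ℓ → ℝ)
    (i : Fin n) (v : Fin ℓ → ℝ) :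
    ∃ q : Fin ℓ → ℝ, msExp ℓ n κ (fun u ↦ (linForm c u - q (u i)) ^ 2) ≤
      ∑ j ∈ univ.erase i, spread (c j - v) := by
  set d : Fin n → Fin ℓ → ℝ := Function.update (fun j ↦ c j - v) i 0
  have hd : ∀ j ∈ univ.erase i, d j = c j - v := fun j hj ↦
    Function.update_of_ne (ne_of_mem_erase hj) ..
  have hdi : d i = 0 := Function.update_self ..
  have hlin : ∀ u ∈ multislice ℓ n κ,
      linForm c u = linForm d u + (∑ a, κ a * v a + (c i - v) (u i)) := fun u hu ↦ by
    have hv : ∑ j, v (u j) = ∑ a, κ a * v a := by simp [sum_comp_of_mem_multislice hu v]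
    simp only [linForm, ← hv, ← add_sum_erase univ _ (mem_univ i), hdi]
    rw [sum_congr rfl fun j hj ↦ congrFun (hd j hj) (u j)]
    simp only [Pi.sub_apply, Pi.zero_apply, sum_sub_distrib]
    ring
  refine ⟨fun b ↦ ∑ a, κ a * v a + (c i - v) b + linMean κ d, ?_⟩
  calc msExp ℓ n κ (fun u ↦
        (linForm c u - (∑ a, κ a * v a + (c i - v) (u i) + linMean κ d)) ^ 2)
      = msExp ℓ n κ fun u ↦ centeredForm κ d u ^ 2 :=
        msExp_congr fun u hu ↦ by rw [hlin u hu, centeredForm]; ring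
    _ ≤ ∑ j, spread (d j) := msExp_sq_centeredForm_le_sum_spread hne i.pos d
    _ = ∑ j ∈ univ.erase i, spread (c j - v) := by
        rw [← add_sum_erase univ _ (mem_univ i), hdi, spread_zero, zero_add]
        exact sum_congr rfl fun j hj ↦ by rw [hd j hj]

end Moments

section Matching

variable {ι : Type*} {M S : Finset (ι × ι)} {p q : ι × ι}

/-- A finite set of ordered pairs which are the edges of a matching: no edge is a loop and distinct
edges have no endpoint in common. In particular at most one orientation of an edge occurs. -/
structure IsMatching (M : Finset (ι × ι)) : Prop where
  ne : ∀ p ∈ M, p.1 ≠ p.2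
  pairwiseDisjoint : (M : Set (ι × ι)).PairwiseDisjoint fun p ↦ ({p.1, p.2} : Set ι)

lemma IsMatching.subset (hM : IsMatching M) (hS : S ⊆ M) : IsMatching S where
  ne p hp := hM.ne p (hS hp)
  pairwiseDisjoint := hM.pairwiseDisjoint.subset (coe_subset.2 hS)

lemma IsMatching.endpoints_ne (hM : IsMatching M) (hp : p ∈ M) (hq : q ∈ M) (hpq : p ≠ q) :
    (p.1 ≠ q.1 ∧ p.1 ≠ q.2) ∧ p.2 ≠ q.1 ∧ p.2 ≠ q.2 := by
  simpa [not_or] using hM.pairwiseDisjoint hq hp hpq.symm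

/-- The total weight of the edges of a matching. -/
def matchingWeight (ω : ι → ι → ℝ) (M : Finset (ι × ι)) : ℝ := ∑ p ∈ M, ω p.1 p.2

/-- The change of `linForm c u` when the entries of `u` are exchanged along all edges of a
matching. -/
def swapSum {α : Type*} (c : ι → α → ℝ) (M : Finset (ι × ι)) (u : ι → α) : ℝ :=
  ∑ p ∈ M, swapDiff c p.1 p.2 u

variable {α : Type*}

lemma IsMatching.swapDiff_comp_swap_of_ne [DecidableEq ι] (hM : IsMatching M) (hp : p ∈ M)
    (hq : q ∈ M) (hpq : p ≠ q) (c : ι → α → ℝ) (u : ι → α) :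
    swapDiff c p.1 p.2 (u ∘ Equiv.swap q.1 q.2) = swapDiff c p.1 p.2 u :=
  have h := hM.endpoints_ne hp hq hpq
  swapDiff_comp_swap_of_ne_of_ne c h.1.1 h.1.2 h.2.1 h.2.2 u

lemma IsMatching.swapSum_comp_swap_of_notMem [DecidableEq ι] (hM : IsMatching M) (hS : S ⊆ M)
    (hq : q ∈ M) (hqS : q ∉ S) (c : ι → α → ℝ) (u : ι → α) :
    swapSum c S (u ∘ Equiv.swap q.1 q.2) = swapSum c S u :=
  sum_congr rfl fun _ hp ↦
    hM.swapDiff_comp_swap_of_ne (hS hp) hq (ne_of_mem_of_not_mem hp hqS) c u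

lemma IsMatching.swapSum_comp_swap_of_mem [DecidableEq ι] (hM : IsMatching M) (hq : q ∈ M)
    (c : ι → α → ℝ) (u : ι → α) :
    swapSum c M (u ∘ Equiv.swap q.1 q.2) = swapSum c M u - 2 * swapDiff c q.1 q.2 u := by
  have hrest := hM.swapSum_comp_swap_of_notMem (erase_subset q M) hq (notMem_erase q M) c u
  simp only [swapSum] at hrest ⊢
  rw [← add_sum_erase M _ hq, ← add_sum_erase M _ hq, hrest, swapDiff_comp_swap]
  ring

lemma IsMatching.exists_perm_linForm_comp [Fintype ι] (hM : IsMatching M) (c : ι → α → ℝ) :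
    ∃ σ : Equiv.Perm ι, ∀ u, linForm c (u ∘ σ) = linForm c u + swapSum c M u := by
  classical
  induction M using Finset.induction_on with
  | empty => exact ⟨1, fun u ↦ by simp [swapSum]⟩
  | insert q S hqS ih =>
    obtain ⟨σ, hσ⟩ := ih (hM.subset (subset_insert q S))
    refine ⟨Equiv.swap q.1 q.2 * σ, fun u ↦ ?_⟩
    rw [Equiv.Perm.coe_mul, ← Function.comp_assoc, hσ, linForm_comp_swap, add_assoc,
      hM.swapSum_comp_swap_of_notMem (subset_insert q S) (mem_insert_self q S) hqS]
    simp only [swapSum, sum_insert hqS]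

end Matching

section SwapSumMoments

variable {ℓ n : ℕ} {κ : Fin ℓ → ℕ} {θ : ℝ} {M S T : Finset (Fin n × Fin n)}
  {G : (Fin n → Fin ℓ) → ℝ}

lemma two_mul_msExp_swapSum_mul (c : Fin n → Fin ℓ → ℝ) (M : Finset (Fin n × Fin n))
    (φ : (Fin n → Fin ℓ) → ℝ) :
    2 * msExp ℓ n κ (fun u ↦ swapSum c M u * φ u) = ∑ p ∈ M,
      msExp ℓ n κ fun u ↦ swapDiff c p.1 p.2 u * (φ u - φ (u ∘ Equiv.swap p.1 p.2)) := by
  simp only [swapSum, sum_mul, msExp_sum, mul_sum]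
  exact sum_congr rfl fun p _ ↦
    two_mul_msExp_mul_of_comp_perm_eq_neg (swapDiff_comp_swap c p.1 p.2) φ

lemma IsMatching.msExp_sq_swapSum_mul (hM : IsMatching M) (c : Fin n → Fin ℓ → ℝ)
    (hG : ∀ p ∈ M, ∀ u, G (u ∘ Equiv.swap p.1 p.2) = G u) :
    msExp ℓ n κ (fun u ↦ swapSum c M u ^ 2 * G u) =
      ∑ p ∈ M, msExp ℓ n κ fun u ↦ swapDiff c p.1 p.2 u ^ 2 * G u := by
  refine mul_left_cancel₀ (two_ne_zero' ℝ) ?_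
  simp only [sq (swapSum _ _ _), mul_assoc]
  rw [two_mul_msExp_swapSum_mul, mul_sum]
  refine sum_congr rfl fun p hp ↦ ?_
  rw [← msExp_const_mul]
  refine msExp_congr fun u _ ↦ ?_
  rw [hG p hp, hM.swapSum_comp_swap_of_mem hp]
  ring

lemma IsMatching.msExp_sq_swapSum_mul_le (hM : IsMatching M) (c : Fin n → Fin ℓ → ℝ)
    (hG₀ : ∀ u, 0 ≤ G u) (hG : ∀ p ∈ M, ∀ u, G (u ∘ Equiv.swap p.1 p.2) = G u) :
    msExp ℓ n κ (fun u ↦ swapSum c M u ^ 2 * G u) ≤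
      matchingWeight (rowDist c) M * msExp ℓ n κ G := by
  rw [hM.msExp_sq_swapSum_mul c hG, matchingWeight, sum_mul]
  simp only [← msExp_const_mul]
  exact sum_le_sum fun p _ ↦ msExp_mono fun u _ ↦
    mul_le_mul_of_nonneg_right (sq_swapDiff_le c p.1 p.2 u) (hG₀ u)

lemma matchingWeight_nonneg {ι : Type*} {ω : ι → ι → ℝ} (hω : ∀ i j, 0 ≤ ω i j)
    (M : Finset (ι × ι)) : 0 ≤ matchingWeight ω M := sum_nonneg fun p _ ↦ hω p.1 p.2

lemma IsMatching.msExp_swapSum_pow_four_mul_le (hM : IsMatching M) (c : Fin n → Fin ℓ → ℝ)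
    (hG₀ : ∀ u, 0 ≤ G u) (hG : ∀ p ∈ M, ∀ u, G (u ∘ Equiv.swap p.1 p.2) = G u) :
    msExp ℓ n κ (fun u ↦ swapSum c M u ^ 4 * G u) ≤
      3 * matchingWeight (rowDist c) M ^ 2 * msExp ℓ n κ G := by
  set X := swapSum c M with hX
  set W := matchingWeight (rowDist c) M with hW
  have hW₀ : 0 ≤ W := matchingWeight_nonneg (isSqDist_rowDist c).nonneg M
  have hterm : ∀ p ∈ M, msExp ℓ n κ (fun u ↦ swapDiff c p.1 p.2 u *
        (X u ^ 3 * G u - X (u ∘ Equiv.swap p.1 p.2) ^ 3 * G (u ∘ Equiv.swap p.1 p.2))) ≤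
      rowDist c p.1 p.2 * (6 * msExp ℓ n κ fun u ↦ X u ^ 2 * G u) := by
    intro p hp
    have hXp (u) : X (u ∘ Equiv.swap p.1 p.2) = X u - 2 * swapDiff c p.1 p.2 u :=
      hM.swapSum_comp_swap_of_mem hp c u
    have h := msExp_sub_mul_cube_sub_cube_le (κ := κ) (f := X) (Equiv.swap p.1 p.2) hG₀ (hG p hp)
      (W := 4 * rowDist c p.1 p.2) fun u ↦ by
        rw [hXp]
        linarith [sq_swapDiff_le c p.1 p.2 u]
    calc _ = 1 / 2 * msExp ℓ n κ (fun u ↦ (X (u ∘ Equiv.swap p.1 p.2) - X u) *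
          (X (u ∘ Equiv.swap p.1 p.2) ^ 3 - X u ^ 3) * G u) := by
          rw [← msExp_const_mul]
          exact msExp_congr fun u _ ↦ by rw [hG p hp, hXp]; ring
      _ ≤ _ := by linarith
  have hfour : msExp ℓ n κ (fun u ↦ X u ^ 4 * G u) ≤
      3 * W * msExp ℓ n κ fun u ↦ X u ^ 2 * G u := by
    have h := two_mul_msExp_swapSum_mul (κ := κ) c M fun u ↦ X u ^ 3 * G u
    simp only [← hX, ← mul_assoc, ← pow_succ'] at h
    have hsum := sum_le_sum hterm
    rw [← sum_mul, ← matchingWeight, ← hW] at hsum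
    linarith
  calc msExp ℓ n κ (fun u ↦ X u ^ 4 * G u) ≤ 3 * W * msExp ℓ n κ fun u ↦ X u ^ 2 * G u := hfour
    _ ≤ 3 * W * (W * msExp ℓ n κ G) := by gcongr; exact hM.msExp_sq_swapSum_mul_le c hG₀ hG
    _ = 3 * W ^ 2 * msExp ℓ n κ G := by ring

lemma IsMatching.pow_four_mul_rowDist_mul_rowDist_le (hM : IsMatching M)
    (hne : (multislice ℓ n κ).Nonempty) (hθ : 0 ≤ θ) (hκ : ∀ a, θ * n + 3 ≤ κ a)
    (c : Fin n → Fin ℓ → ℝ) {p q : Fin n × Fin n} (hp : p ∈ M) (hq : q ∈ M) (hpq : p ≠ q) :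
    θ ^ 4 * (rowDist c p.1 p.2 * rowDist c q.1 q.2) ≤
      msExp ℓ n κ fun u ↦ swapDiff c p.1 p.2 u ^ 2 * swapDiff c q.1 q.2 u ^ 2 := by
  have hdisj := hM.endpoints_ne hq hp hpq.symm
  have hcard : (#{p.1, p.2} : ℝ) = 2 := by exact_mod_cast card_pair (hM.ne p hp)
  have hdep : DependsOn (fun u : Fin n → Fin ℓ ↦ swapDiff c p.1 p.2 u ^ 2)
      (({p.1, p.2} : Finset (Fin n)) : Set (Fin n)) := fun u v huv ↦ by
    simp only [swapDiff, huv p.1 (by simp), huv p.2 (by simp)]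
  have hω := (isSqDist_rowDist c).nonneg q.1 q.2
  calc θ ^ 4 * (rowDist c p.1 p.2 * rowDist c q.1 q.2)
      = θ ^ 2 * rowDist c q.1 q.2 * (θ ^ 2 * rowDist c p.1 p.2) := by ring
    _ ≤ θ ^ 2 * rowDist c q.1 q.2 * msExp ℓ n κ fun u ↦ swapDiff c p.1 p.2 u ^ 2 := by
        gcongr
        exact sq_mul_rowDist_le_msExp_sq_swapDiff hne hθ (fun a ↦ by linarith [hκ a]) c _ _
    _ ≤ _ := sq_mul_rowDist_mul_msExp_le hθ (fun a ↦ by rw [hcard]; linarith [hκ a])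
        (hM.ne q hq) (by simpa using hdisj.1) (by simpa using hdisj.2)
        (fun u ↦ sq_nonneg _) hdep c

lemma IsMatching.pow_four_mul_matchingWeight_mul_le (hM : IsMatching M)
    (hne : (multislice ℓ n κ).Nonempty) (hθ : 0 ≤ θ) (hκ : ∀ a, θ * n + 3 ≤ κ a)
    (c : Fin n → Fin ℓ → ℝ) (hS : S ⊆ M) (hT : T ⊆ M) (hST : Disjoint S T) :
    θ ^ 4 * (matchingWeight (rowDist c) S * matchingWeight (rowDist c) T) ≤
      msExp ℓ n κ fun u ↦ swapSum c S u ^ 2 * swapSum c T u ^ 2 := by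
  rw [(hM.subset hS).msExp_sq_swapSum_mul c fun p hp u ↦ by
    rw [hM.swapSum_comp_swap_of_notMem hT (hS hp) (disjoint_left.1 hST hp)]]
  rw [matchingWeight, matchingWeight, sum_mul_sum, mul_sum]
  refine sum_le_sum fun p hp ↦ ?_
  have hpT : ∀ q ∈ T, p ≠ q := fun q hq ↦ (ne_of_mem_of_not_mem hq (disjoint_left.1 hST hp)).symm
  simp only [mul_comm (swapDiff c p.1 p.2 _ ^ 2)]
  rw [(hM.subset hT).msExp_sq_swapSum_mul c fun q hq u ↦ by
    rw [hM.swapDiff_comp_swap_of_ne (hS hp) (hT hq) (hpT q hq)], mul_sum]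
  refine sum_le_sum fun q hq ↦ ?_
  simpa only [mul_comm (swapDiff c q.1 q.2 _ ^ 2)] using
    hM.pow_four_mul_rowDist_mul_rowDist_le hne hθ hκ c (hS hp) (hT hq) (hpT q hq)

end SwapSumMoments

section BooleanInput

/- `F` takes Boolean values at the vertices of a parallelogram; if none of the first three cases
holds, then `2 * X` is an alternating sum of the four errors. -/
lemma min_sq_sq_le_four_mul_sum_sq {F₀ F₁ F₂ F₃ : ℝ} (h₀ : F₀ = 0 ∨ F₀ = 1) (h₁ : F₁ = 0 ∨ F₁ = 1)
    (h₂ : F₂ = 0 ∨ F₂ = 1) (h₃ : F₃ = 0 ∨ F₃ = 1) (v X Y : ℝ) :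
    min (X ^ 2) (Y ^ 2) ≤ 4 * ((F₀ - v) ^ 2 + (F₁ - (v + X)) ^ 2 + (F₂ - (v + Y)) ^ 2 +
      (F₃ - (v + (X + Y))) ^ 2) := by
  have hcases : F₀ = F₁ ∨ F₂ = F₃ ∨ F₀ = F₂ ∨ F₃ = F₀ + F₂ - F₁ := by
    rcases h₀ with rfl | rfl <;> rcases h₁ with rfl | rfl <;> rcases h₂ with rfl | rfl <;>
      rcases h₃ with rfl | rfl <;> norm_num
  obtain ⟨e₀, rfl⟩ : ∃ e₀, F₀ = v + e₀ := ⟨F₀ - v, by ring⟩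
  obtain ⟨e₁, rfl⟩ : ∃ e₁, F₁ = v + X + e₁ := ⟨F₁ - (v + X), by ring⟩
  obtain ⟨e₂, rfl⟩ : ∃ e₂, F₂ = v + Y + e₂ := ⟨F₂ - (v + Y), by ring⟩
  obtain ⟨e₃, rfl⟩ : ∃ e₃, F₃ = v + (X + Y) + e₃ := ⟨F₃ - (v + (X + Y)), by ring⟩
  simp only [add_sub_cancel_left]
  have he₀ := sq_nonneg e₀
  have he₁ := sq_nonneg e₁
  have he₂ := sq_nonneg e₂
  have he₃ := sq_nonneg e₃
  rcases hcases with h | h | h | h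
  · obtain rfl : X = e₀ - e₁ := by linarith
    exact min_le_of_left_le (by linarith [sq_nonneg (e₀ + e₁), he₂, he₃])
  · obtain rfl : X = e₂ - e₃ := by linarith
    exact min_le_of_left_le (by linarith [sq_nonneg (e₂ + e₃), he₀, he₁])
  · obtain rfl : Y = e₀ - e₂ := by linarith
    exact min_le_of_right_le (by linarith [sq_nonneg (e₀ + e₂), he₁, he₃])
  · obtain rfl : X = (e₀ - e₁ + e₂ - e₃) / 2 := by linarith
    refine min_le_of_left_le ?_
    linarith [sq_nonneg (e₀ + e₁), sq_nonneg (e₀ - e₂), sq_nonneg (e₀ + e₃),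
      sq_nonneg (e₁ + e₂), sq_nonneg (e₁ - e₃), sq_nonneg (e₂ + e₃), he₀, he₁, he₂, he₃]

lemma mul_mul_le_sq_mul_min_add {m x y : ℝ} (hm : 0 ≤ m) (hx : 0 ≤ x) (hy : 0 ≤ y) :
    m * (x * y) ≤ m ^ 2 * min x y + (x ^ 2 * y + y ^ 2 * x) := by
  wlog hxy : x ≤ y generalizing x y
  · have h := this hy hx (le_of_not_ge hxy)
    rw [min_comm]
    linarith
  rw [min_eq_left hxy]
  have h₁ : 0 ≤ x * (m - y) ^ 2 := by positivity
  have h₂ : 0 ≤ x ^ 2 * y := by positivity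
  have h₃ : 0 ≤ m * (x * y) := by positivity
  linarith

lemma min_le_of_forall_mul_le {A B E δ : ℝ} (hA : 0 ≤ A) (hB : 0 ≤ B) (hE : 0 ≤ E) (hδ : 0 < δ)
    (h : ∀ m, 0 ≤ m → m * (δ * (A * B)) ≤ m ^ 2 * E + 3 * (A * B) * (A + B)) :
    min A B ≤ 24 * E / δ ^ 2 := by
  wlog hAB : A ≤ B generalizing A B
  · rw [min_comm]
    exact this hB hA (fun m hm ↦ by linarith [h m hm]) (le_of_not_ge hAB)
  rw [min_eq_left hAB]
  obtain rfl | hB₀ := hB.eq_or_lt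
  · exact hAB.trans (by positivity)
  have hopt := h (6 * (A + B) / δ) (by positivity)
  have hprod : 3 * (A + B) * (A * B) ≤ 3 * (A + B) * (12 * (A + B) * E / δ ^ 2) := by
    have h₁ : 6 * (A + B) / δ * (δ * (A * B)) = 6 * (A + B) * (A * B) := by field_simp
    have h₂ : (6 * (A + B) / δ) ^ 2 * E = 3 * (A + B) * (12 * (A + B) * E / δ ^ 2) := by ring
    linarith
  refine le_of_mul_le_mul_right ?_ hB₀
  calc A * B ≤ 12 * (A + B) * E / δ ^ 2 := le_of_mul_le_mul_left hprod (by positivity)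
    _ ≤ 12 * (B + B) * E / δ ^ 2 := by gcongr
    _ = 24 * E / δ ^ 2 * B := by ring

lemma exists_sum_erase_le_two_mul {ι : Type*} [DecidableEq ι] [Nonempty ι] {P : Finset ι}
    {w : ι → ℝ} {η : ℝ} (hw : ∀ i, 0 ≤ w i)
    (h : ∀ S ⊆ P, min (∑ i ∈ S, w i) (∑ i ∈ P \ S, w i) ≤ η) :
    ∃ t, ∑ i ∈ P.erase t, w i ≤ 2 * η := by
  have hη : 0 ≤ η := by simpa [sum_nonneg fun i _ ↦ hw i] using h ∅ (empty_subset P)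
  obtain hP | hP := le_or_gt (∑ i ∈ P, w i) η
  · have hmono := sum_le_sum_of_subset_of_nonneg (erase_subset (Classical.arbitrary ι) P)
      fun i _ _ ↦ hw i
    exact ⟨Classical.arbitrary ι, by linarith⟩
  obtain ⟨S, hSP, hS⟩ := exists_minimal_le_of_wellFoundedLT (fun S ↦ η < ∑ i ∈ S, w i) P hP
  obtain ⟨t, ht⟩ : S.Nonempty := by
    by_contra hempty
    have hlt := hS.prop
    simp only [not_nonempty_iff_eq_empty.1 hempty, sum_empty] at hlt
    linarith
  refine ⟨t, ?_⟩
  have hSt : ∑ i ∈ S.erase t, w i ≤ η := not_lt.1 (hS.not_prop_of_lt (erase_ssubset ht))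
  have hPS : ∑ i ∈ P \ S, w i ≤ η := (min_le_iff.1 (h S hSP)).resolve_left hS.prop.not_ge
  linarith [sum_sdiff (f := w) hSP, add_sum_erase S w ht, add_sum_erase P w (hSP ht)]

/-- In every matching all edges but one together have `ω`-weight at most `η`. -/
def MatchingConcentrated {ι : Type*} [DecidableEq ι] (ω : ι → ι → ℝ) (η : ℝ) : Prop :=
  ∀ M : Finset (ι × ι), IsMatching M → ∃ p, matchingWeight ω (M.erase p) ≤ η

variable {ℓ n : ℕ} {κ : Fin ℓ → ℕ} {θ : ℝ} {M S T : Finset (Fin n × Fin n)}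
  {F : (Fin n → Fin ℓ) → ℝ}

lemma IsMatching.msExp_min_sq_swapSum_le (hM : IsMatching M) (hF : booleanOn ℓ n κ F)
    (c : Fin n → Fin ℓ → ℝ) (hS : S ⊆ M) (hT : T ⊆ M) (hST : Disjoint S T) :
    msExp ℓ n κ (fun u ↦ min (swapSum c S u ^ 2) (swapSum c T u ^ 2)) ≤
      16 * msExp ℓ n κ fun u ↦ (F u - linForm c u) ^ 2 := by
  obtain ⟨σ, hσ⟩ := (hM.subset hS).exists_perm_linForm_comp c
  obtain ⟨τ, hτ⟩ := (hM.subset hT).exists_perm_linForm_comp c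
  obtain ⟨π, hπ⟩ := (hM.subset (union_subset hS hT)).exists_perm_linForm_comp c
  have hsum (u) : swapSum c (S ∪ T) u = swapSum c S u + swapSum c T u := sum_union hST
  have hFperm (ψ : Equiv.Perm (Fin n)) {u} (hu : u ∈ multislice ℓ n κ) :=
    hF _ ((comp_perm_mem_multislice ψ).2 hu)
  set e : (Fin n → Fin ℓ) → ℝ := fun u ↦ (F u - linForm c u) ^ 2
  calc msExp ℓ n κ (fun u ↦ min (swapSum c S u ^ 2) (swapSum c T u ^ 2))
      ≤ msExp ℓ n κ fun u ↦ 4 * (e u + e (u ∘ σ) + e (u ∘ τ) + e (u ∘ π)) :=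
        msExp_mono fun u hu ↦ by
          simp only [e, hσ, hτ, hπ, hsum]
          exact min_sq_sq_le_four_mul_sum_sq (hF u hu) (hFperm σ hu) (hFperm τ hu) (hFperm π hu)
            _ _ _
    _ = 16 * msExp ℓ n κ e := by
        rw [msExp_const_mul, msExp_add, msExp_add, msExp_add, msExp_comp_perm σ e,
          msExp_comp_perm τ e, msExp_comp_perm π e]
        ring

/- An interpolation: `E[X² Y²]`, bounded below by the product of the weights, is controlled by
`E[min (X², Y²)]` and by the sixth moments `E[X⁴ Y²]` and `E[X² Y⁴]`. -/
lemma IsMatching.min_matchingWeight_le (hM : IsMatching M) (hne : (multislice ℓ n κ).Nonempty)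
    (hθ : 0 < θ) (hκ : ∀ a, θ * n + 3 ≤ κ a) (hF : booleanOn ℓ n κ F) (c : Fin n → Fin ℓ → ℝ)
    (hS : S ⊆ M) (hT : T ⊆ M) (hST : Disjoint S T) :
    min (matchingWeight (rowDist c) S) (matchingWeight (rowDist c) T) ≤
      384 * msExp ℓ n κ (fun u ↦ (F u - linForm c u) ^ 2) / θ ^ 8 := by
  have hsixth {S T} (hS : S ⊆ M) (hT : T ⊆ M) (hST : Disjoint S T) :
      msExp ℓ n κ (fun u ↦ swapSum c S u ^ 4 * swapSum c T u ^ 2) ≤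
        3 * matchingWeight (rowDist c) S ^ 2 * matchingWeight (rowDist c) T := by
    have hsq : msExp ℓ n κ (fun u ↦ swapSum c T u ^ 2) ≤ matchingWeight (rowDist c) T := by
      simpa only [mul_one, msExp_const hne] using (hM.subset hT).msExp_sq_swapSum_mul_le (κ := κ) c
        (G := fun _ ↦ 1) (fun _ ↦ zero_le_one) fun _ _ _ ↦ rfl
    refine ((hM.subset hS).msExp_swapSum_pow_four_mul_le c (fun u ↦ sq_nonneg _)
      fun p hp u ↦ ?_).trans (mul_le_mul_of_nonneg_left hsq (by positivity))
    rw [hM.swapSum_comp_swap_of_notMem hT (hS hp) (disjoint_left.1 hST hp)]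
  have hmin := hM.msExp_min_sq_swapSum_le hF c hS hT hST
  have hprod := hM.pow_four_mul_matchingWeight_mul_le hne hθ.le hκ c hS hT hST
  set ε := msExp ℓ n κ fun u ↦ (F u - linForm c u) ^ 2
  have hε : 0 ≤ ε := msExp_nonneg fun u _ ↦ sq_nonneg _
  have hω := (isSqDist_rowDist c).nonneg
  refine (min_le_of_forall_mul_le (E := 16 * ε) (δ := θ ^ 4) (matchingWeight_nonneg hω S)
    (matchingWeight_nonneg hω T) (by positivity) (by positivity) fun m hm ↦ ?_).trans_eq (by ring)
  calc m * (θ ^ 4 * (matchingWeight (rowDist c) S * matchingWeight (rowDist c) T))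
      ≤ m * msExp ℓ n κ fun u ↦ swapSum c S u ^ 2 * swapSum c T u ^ 2 := by gcongr
    _ ≤ m ^ 2 * msExp ℓ n κ (fun u ↦ min (swapSum c S u ^ 2) (swapSum c T u ^ 2)) +
          (msExp ℓ n κ (fun u ↦ swapSum c S u ^ 4 * swapSum c T u ^ 2) +
            msExp ℓ n κ fun u ↦ swapSum c T u ^ 4 * swapSum c S u ^ 2) := by
        simp only [← msExp_const_mul, ← msExp_add]
        refine msExp_mono fun u _ ↦ ?_
        have h := mul_mul_le_sq_mul_min_add hm (sq_nonneg (swapSum c S u))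
          (sq_nonneg (swapSum c T u))
        simpa only [← pow_mul] using h
    _ ≤ _ := by
        linarith [mul_le_mul_of_nonneg_left hmin (sq_nonneg m), hsixth hS hT hST,
          hsixth hT hS hST.symm]

lemma matchingConcentrated_rowDist (hne : (multislice ℓ n κ).Nonempty) (hn : 0 < n) (hθ : 0 < θ)
    (hκ : ∀ a, θ * n + 3 ≤ κ a) (hF : booleanOn ℓ n κ F) (c : Fin n → Fin ℓ → ℝ) :
    MatchingConcentrated (rowDist c)
      (768 * msExp ℓ n κ (fun u ↦ (F u - linForm c u) ^ 2) / θ ^ 8) := fun M hM ↦ by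
  have : Nonempty (Fin n × Fin n) := ⟨⟨0, hn⟩, ⟨0, hn⟩⟩
  obtain ⟨p, hp⟩ := exists_sum_erase_le_two_mul (P := M) (w := fun p ↦ rowDist c p.1 p.2)
    (fun p ↦ (isSqDist_rowDist c).nonneg p.1 p.2)
    fun S hS ↦ hM.min_matchingWeight_le hne hθ hκ hF c hS sdiff_subset disjoint_sdiff
  refine ⟨p, hp.trans_eq ?_⟩
  ring

end BooleanInput

section Concentration

lemma isMatching_pair {ι : Type*} [DecidableEq ι] {i j k l : ι} (h : [i, j, k, l].Nodup) :
    IsMatching {(i, j), (k, l)} where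
  ne := by aesop
  pairwiseDisjoint := by
    simp only [coe_pair, Set.PairwiseDisjoint, Set.pairwise_pair, Function.onFun]
    aesop

lemma exists_isMatching_sum_eq_two_mul {ι : Type*} [Fintype ι] {ω : ι → ι → ℝ} (hω : IsSqDist ω)
    {σ : ι → ι} (hσ : σ.Involutive) :
    ∃ M : Finset (ι × ι), IsMatching M ∧ ∑ j, ω j (σ j) = 2 * matchingWeight ω M := by
  let f := Fintype.equivFin ι
  let edge : ι ↪ ι × ι := ⟨fun j ↦ (j, σ j), fun _ _ h ↦ congrArg Prod.fst h⟩
  have hedge (j : ι) : edge j = (j, σ j) := rfl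
  refine ⟨({j | f j < f (σ j)} : Finset ι).map edge, ⟨?_, ?_⟩, ?_⟩
  · simp only [mem_map, mem_filter_univ]
    rintro _ ⟨j, hj, rfl⟩ h
    exact hj.ne (congrArg f h)
  · intro p hp q hq hpq
    obtain ⟨j, hj, rfl⟩ := mem_map.1 hp
    obtain ⟨k, hk, rfl⟩ := mem_map.1 hq
    rw [mem_filter_univ] at hj hk
    have hjk : j ≠ k := fun h ↦ hpq (congrArg edge h)
    have hjσk : j ≠ σ k := by
      rintro rfl
      exact hk.asymm (by simpa only [hσ k] using hj)
    have hσjk : σ j ≠ k := fun h ↦ hjσk (hσ.eq_iff.1 h)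
    simp [Function.onFun, hedge, hjσk.symm, hσjk.symm, hjk.symm, hσ.injective.eq_iff]
  · let g (j : ι) : ℝ := if f j < f (σ j) then ω j (σ j) else 0
    have hsplit (j : ι) : ω j (σ j) = g j + g (σ j) := by
      simp only [g, hσ j, hω.comm (σ j)]
      rcases lt_trichotomy (f j) (f (σ j)) with h | h | h
      · simp [h, h.not_gt]
      · simp [← f.injective h, hω.self]
      · simp [h, h.not_gt]
    calc ∑ j, ω j (σ j) = ∑ j, g j + ∑ j, g (σ j) := by simp only [hsplit, sum_add_distrib]
      _ = 2 * ∑ j, g j := by rw [two_mul, hσ.bijective.sum_comp g]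
      _ = _ := by simp [matchingWeight, hedge, g, sum_filter]

/- The involutions `x ↦ s - x` of a cyclic group form a Latin square. -/
lemma exists_sum_le_of_forall_involutive {α : Type*} [Fintype α] [Nonempty α] {w : α → α → ℝ}
    {C : ℝ} (h : ∀ σ : α → α, σ.Involutive → ∑ j, w j (σ j) ≤ C) : ∃ k, ∑ j, w j k ≤ C := by
  let e := Fintype.equivFin α
  let σ (s x : α) : α := e.symm (e s - e x)
  have hσ (s : α) : (σ s).Involutive := fun x ↦ by simp [σ]
  have hlatin (x : α) : ∑ s, w x (σ s x) = ∑ y, w x y :=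
    Equiv.sum_comp ((e.trans (Equiv.subRight (e x))).trans e.symm) (w x)
  have hsum : ∑ k, ∑ j, w j k ≤ ∑ _k : α, C :=
    calc ∑ k, ∑ j, w j k = ∑ s, ∑ j, w j (σ s j) := by
          rw [sum_comm, sum_comm (f := fun s j ↦ w j (σ s j))]
          simp only [hlatin]
      _ ≤ ∑ _k : α, C := sum_le_sum fun s _ ↦ h (σ s) (hσ s)
  obtain ⟨k, -, hk⟩ := exists_le_of_sum_le univ_nonempty hsum
  exact ⟨k, hk⟩

variable {ι : Type*} [DecidableEq ι] {ω : ι → ι → ℝ} {η : ℝ}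

lemma MatchingConcentrated.le_or_le (h : MatchingConcentrated ω η) (hω : IsSqDist ω) {i j k l : ι}
    (hne : [i, j, k, l].Nodup) : ω i j ≤ η ∨ ω k l ≤ η := by
  obtain ⟨p, hp⟩ := h _ (isMatching_pair hne)
  have hle {q : ι × ι} (hq : q ∈ ({(i, j), (k, l)} : Finset (ι × ι)).erase p) : ω q.1 q.2 ≤ η :=
    (single_le_sum (f := fun p ↦ ω p.1 p.2) (fun p _ ↦ hω.nonneg p.1 p.2) hq).trans hp
  by_cases hpij : p = (i, j)
  · exact .inr (hle (q := (k, l)) (by aesop))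
  · exact .inl (hle (q := (i, j)) (by simp [Ne.symm hpij]))

variable [Fintype ι] {a b : ι}

lemma MatchingConcentrated.sum_involutive_le (h : MatchingConcentrated ω η) (hω : IsSqDist ω)
    (hmax : ∀ j k, ω j k ≤ ω a b) {σ : ι → ι} (hσ : σ.Involutive) :
    ∑ j, ω j (σ j) ≤ 2 * (ω a b + η) := by
  obtain ⟨M, hM, hsum⟩ := exists_isMatching_sum_eq_two_mul hω hσ
  obtain ⟨p, hp⟩ := h M hM
  have hM_le : matchingWeight ω M ≤ ω p.1 p.2 + matchingWeight ω (M.erase p) := by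
    by_cases hpM : p ∈ M
    · exact (add_sum_erase M (fun p ↦ ω p.1 p.2) hpM).ge
    · rw [erase_eq_of_notMem hpM]
      exact le_add_of_nonneg_left (hω.nonneg _ _)
  linarith [hmax p.1 p.2]

lemma MatchingConcentrated.exists_sum_compl_pair_le (h : MatchingConcentrated ω η)
    (hω : IsSqDist ω) (hι : 2 < Fintype.card ι) (hab : a ≠ b) (hmax : ∀ j k, ω j k ≤ ω a b) :
    ∃ k ∈ ({a, b} : Finset ι)ᶜ, ∑ j ∈ {a, b}ᶜ, ω j k ≤ 2 * η := by
  let R : Finset ι := {a, b}ᶜ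
  have : Nonempty R := by
    rw [nonempty_coe_sort, ← card_pos, card_compl, card_pair hab]
    exact Nat.sub_pos_of_lt hι
  suffices hτ : ∀ τ : R → R, τ.Involutive → ∑ j : R, ω j (τ j) ≤ 2 * η by
    obtain ⟨k, hk⟩ := exists_sum_le_of_forall_involutive (w := fun j k : R ↦ ω j k) hτ
    exact ⟨k, k.2, (sum_coe_sort R fun j ↦ ω j k).symm.trans_le hk⟩
  intro τ hτ
  -- Extend `τ` to an involution of `ι` which exchanges `a` and `b`.
  let σ (j : ι) : ι := if hj : j ∈ R then τ ⟨j, hj⟩ else Equiv.swap a b j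
  have haσ : σ a = b := by simp [σ, R]
  have hbσ : σ b = a := by simp [σ, R]
  have hRσ (j : R) : σ j = τ j := by simp [σ]
  have hσ : σ.Involutive := fun j ↦ by
    by_cases hj : j ∈ R
    · rw [hRσ ⟨j, hj⟩, hRσ, hτ]
    · obtain rfl | rfl : j = a ∨ j = b := by simpa [R, or_iff_not_imp_left] using hj
      · rw [haσ, hbσ]
      · rw [hbσ, haσ]
  have hsum := h.sum_involutive_le hω hmax hσ
  rw [← sum_add_sum_compl {a, b}, sum_pair hab, haσ, hbσ, hω.comm b a, ← sum_coe_sort] at hsum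
  simp only [← hRσ]
  linarith

lemma MatchingConcentrated.exists_sum_erase_le (h : MatchingConcentrated ω η) (hω : IsSqDist ω)
    (hι : 3 < Fintype.card ι) : ∃ i k, ∑ j ∈ univ.erase i, ω j k ≤ 8 * η := by
  have : Nontrivial ι := Fintype.one_lt_card_iff_nontrivial.1 (by lia)
  obtain ⟨x, y, hxy⟩ := exists_pair_ne ι
  obtain ⟨⟨a, b⟩, hab, hab_max⟩ := exists_max_image (univ : Finset ι).offDiag
    (fun p ↦ ω p.1 p.2) ⟨(x, y), by simpa⟩
  replace hab : a ≠ b := (mem_offDiag.1 hab).2.2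
  have hmax (j k : ι) : ω j k ≤ ω a b := by
    obtain rfl | hjk := eq_or_ne j k
    · exact (hω.self j).trans_le (hω.nonneg a b)
    · exact hab_max (j, k) (by simpa)
  obtain ⟨k, hk, hsum⟩ := h.exists_sum_compl_pair_le hω (by lia) hab hmax
  obtain ⟨r, -, hr⟩ := exists_mem_notMem_of_card_lt_card (card_le_three.trans_lt hι :
    #{a, b, k} < #univ)
  simp only [mem_compl, mem_insert, mem_singleton, not_or] at hk hr
  have hrk : ω r k ≤ 2 * η :=
    (single_le_sum (f := fun j ↦ ω j k) (fun j _ ↦ hω.nonneg j k) (by simp [hr])).trans hsum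
  have hη : 0 ≤ η := by linarith [hω.nonneg r k]
  have herase {i j : ι} (hij : i ≠ j) (hR : {i, j} = ({a, b} : Finset ι)) :
      ∑ x ∈ univ.erase i, ω x k = ω j k + ∑ x ∈ {a, b}ᶜ, ω x k := by
    have hcompl : {i, j}ᶜ = (univ.erase i).erase j := by
      ext
      simp [and_comm]
    rw [← hR, hcompl, add_sum_erase (f := fun x ↦ ω x k) _ (by simp [hij.symm])]
  obtain hak | hbr := h.le_or_le hω (i := a) (j := k) (k := b) (l := r) (by grind)
  · exact ⟨b, k, by rw [herase hab.symm (pair_comm b a)]; linarith⟩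
  · exact ⟨a, k, by rw [herase hab rfl]; linarith [hω.le_two_mul_add b r k]⟩

end Concentration

section Rounding

variable {ℓ n : ℕ} {κ : Fin ℓ → ℕ} {θ : ℝ} {F f g p : (Fin n → Fin ℓ) → ℝ}

lemma degreeOne.sub (hf : degreeOne ℓ n κ f) (hg : degreeOne ℓ n κ g) :
    degreeOne ℓ n κ fun u ↦ f u - g u := by
  obtain ⟨a, c, hc⟩ := hf
  obtain ⟨b, d, hd⟩ := hg
  refine ⟨a - b, c - d, fun u hu ↦ ?_⟩
  simp only [hc u hu, hd u hu, Pi.sub_apply, sub_mul, sum_sub_distrib]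
  ring

lemma degreeOne_comp_apply (i : Fin n) (r : Fin ℓ → ℝ) :
    degreeOne ℓ n κ fun u ↦ r (u i) :=
  ⟨0, Pi.single i r, fun u _ ↦ by
    rw [sum_eq_single i (by simp +contextual) (by simp)]
    simp [xvar]⟩

lemma sq_sub_round_le {y : ℝ} (hy : y = 0 ∨ y = 1) (p x : ℝ) :
    (p - if 1 / 2 ≤ x then 1 else 0) ^ 2 ≤ 18 * (y - p) ^ 2 + 16 * (p - x) ^ 2 := by
  set r : ℝ := if 1 / 2 ≤ x then 1 else 0 with hr
  have hround : (y - r) ^ 2 ≤ 4 * (y - x) ^ 2 := by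
    rcases hy with rfl | rfl <;> rw [hr] <;> split_ifs <;> nlinarith
  have hpr := add_sq_le (a := p - y) (b := y - r)
  have hyx := add_sq_le (a := y - p) (b := p - x)
  rw [sub_add_sub_cancel] at hpr hyx
  linarith [sub_sq_comm y p]

/- If `y ≠ z`, then `1 ≤ 2 * (y - p) ^ 2 + 2 * (p - z) ^ 2`, and AM-GM gives
`4 * (p - z) ^ 2 ≤ 1 + 4 * (p - z) ^ 4`; this is where the leading constant 4 comes from. -/
lemma ite_eq_le_sq_add_pow_four {y z : ℝ} (hy : y = 0 ∨ y = 1) (hz : z = 0 ∨ z = 1) (p : ℝ) :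
    (if y = z then 0 else 1) ≤ 4 * (y - p) ^ 2 + 4 * (p - z) ^ 4 := by
  split_ifs with h
  · positivity
  have hone : (y - z) ^ 2 = 1 := by
    rcases hy with rfl | rfl <;> rcases hz with rfl | rfl <;> simp_all
  have htri := add_sq_le (a := y - p) (b := p - z)
  rw [sub_add_sub_cancel, hone] at htri
  linarith [sq_nonneg (2 * (p - z) ^ 2 - 1)]

lemma msExp_ite_eq_le (hne : (multislice ℓ n κ).Nonempty) (hn : 0 < n) (hθ : 0 < θ)
    (hκ : ∀ a, θ * n + 1 ≤ κ a) (hF : booleanOn ℓ n κ F) (hg : booleanOn ℓ n κ g)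
    (hp : degreeOne ℓ n κ p) (hg₁ : degreeOne ℓ n κ g) :
    msExp ℓ n κ (fun u ↦ if F u = g u then (0 : ℝ) else 1) ≤
      4 * msExp ℓ n κ (fun u ↦ (F u - p u) ^ 2) +
        96 / θ ^ 2 * msExp ℓ n κ (fun u ↦ (p u - g u) ^ 2) ^ 2 := by
  have hfourth := (hp.sub hg₁).sq_mul_msExp_pow_four_le hne hn hθ.le hκ
  rw [← le_div_iff₀' (by positivity)] at hfourth
  calc msExp ℓ n κ (fun u ↦ if F u = g u then (0 : ℝ) else 1)
      ≤ msExp ℓ n κ fun u ↦ 4 * (F u - p u) ^ 2 + 4 * (p u - g u) ^ 4 :=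
        msExp_mono fun u hu ↦ ite_eq_le_sq_add_pow_four (hF u hu) (hg u hu) (p u)
    _ = 4 * msExp ℓ n κ (fun u ↦ (F u - p u) ^ 2) +
          4 * msExp ℓ n κ fun u ↦ (p u - g u) ^ 4 := by
        rw [msExp_add, msExp_const_mul, msExp_const_mul]
    _ ≤ 4 * msExp ℓ n κ (fun u ↦ (F u - p u) ^ 2) +
          4 * (24 * msExp ℓ n κ (fun u ↦ (p u - g u) ^ 2) ^ 2 / θ ^ 2) := by gcongr
    _ = _ := by ring

lemma booleanOn.exists_msExp_sq_sub_comp_apply_le (hF : booleanOn ℓ n κ F)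
    (hp : degreeOne ℓ n κ p) (hne : (multislice ℓ n κ).Nonempty) (hn : 3 < n) (hθ : 0 < θ)
    (hκ : ∀ a, θ * n + 3 ≤ κ a) :
    ∃ (i : Fin n) (q : Fin ℓ → ℝ), msExp ℓ n κ (fun u ↦ (p u - q (u i)) ^ 2) ≤
      6144 / θ ^ 8 * msExp ℓ n κ fun u ↦ (F u - p u) ^ 2 := by
  obtain ⟨c, hc⟩ := hp.exists_eq_linForm (by lia)
  have hconc := matchingConcentrated_rowDist hne (by lia) hθ hκ hF c
  obtain ⟨i, k, hik⟩ := hconc.exists_sum_erase_le (isSqDist_rowDist c) (by simpa)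
  obtain ⟨q, hq⟩ := exists_msExp_sq_linForm_sub_le (κ := κ) hne c i (c k)
  refine ⟨i, q, ?_⟩
  rw [msExp_congr (g := fun u ↦ (linForm c u - q (u i)) ^ 2) fun u hu ↦ by rw [hc u hu],
    msExp_congr (f := fun u ↦ (F u - p u) ^ 2) (g := fun u ↦ (F u - linForm c u) ^ 2)
      fun u hu ↦ by rw [hc u hu]]
  exact (hq.trans hik).trans_eq (by ring)

lemma booleanOn.exists_dictator (hF : booleanOn ℓ n κ F) (hp : degreeOne ℓ n κ p)
    (hne : (multislice ℓ n κ).Nonempty) (hn : 3 < n) (hθ : 0 < θ) (hκ : ∀ a, θ * n + 3 ≤ κ a) :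
    ∃ g, booleanOn ℓ n κ g ∧ dictator ℓ n κ g ∧
      msExp ℓ n κ (fun u ↦ if F u = g u then (0 : ℝ) else 1) ≤
        4 * msExp ℓ n κ (fun u ↦ (F u - p u) ^ 2) +
          96 / θ ^ 2 * (18 + 16 * (6144 / θ ^ 8)) ^ 2 *
            msExp ℓ n κ (fun u ↦ (F u - p u) ^ 2) ^ 2 := by
  obtain ⟨i, q, hq⟩ := hF.exists_msExp_sq_sub_comp_apply_le hp hne hn hθ hκ
  set ε := msExp ℓ n κ fun u ↦ (F u - p u) ^ 2
  let r (a : Fin ℓ) : ℝ := if 1 / 2 ≤ q a then 1 else 0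
  have hr : booleanOn ℓ n κ fun u ↦ r (u i) := fun u _ ↦ by
    simp only [r]
    split_ifs <;> simp
  have hpr : msExp ℓ n κ (fun u ↦ (p u - r (u i)) ^ 2) ≤ (18 + 16 * (6144 / θ ^ 8)) * ε :=
    calc msExp ℓ n κ (fun u ↦ (p u - r (u i)) ^ 2)
        ≤ msExp ℓ n κ fun u ↦ 18 * (F u - p u) ^ 2 + 16 * (p u - q (u i)) ^ 2 :=
          msExp_mono fun u hu ↦ sq_sub_round_le (hF u hu) (p u) (q (u i))
      _ = 18 * ε + 16 * msExp ℓ n κ fun u ↦ (p u - q (u i)) ^ 2 := by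
          rw [msExp_add, msExp_const_mul, msExp_const_mul]
      _ ≤ 18 * ε + 16 * (6144 / θ ^ 8 * ε) := by gcongr
      _ = _ := by ring
  refine ⟨fun u ↦ r (u i), hr, ⟨i, fun u _ v _ h ↦ congrArg r h⟩, ?_⟩
  calc msExp ℓ n κ (fun u ↦ if F u = r (u i) then (0 : ℝ) else 1)
      ≤ 4 * ε + 96 / θ ^ 2 * msExp ℓ n κ (fun u ↦ (p u - r (u i)) ^ 2) ^ 2 :=
        msExp_ite_eq_le hne (by lia) hθ (fun a ↦ by linarith [hκ a]) hF hr hp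
          (degreeOne_comp_apply i r)
    _ ≤ 4 * ε + 96 / θ ^ 2 * ((18 + 16 * (6144 / θ ^ 8)) * ε) ^ 2 := by
        gcongr
        exact msExp_nonneg fun u _ ↦ sq_nonneg _
    _ = _ := by ring

end Rounding

theorem fkn_multislice_boolean_general (ℓ : ℕ) (ρ : ℝ) (hρ : 0 < ρ) :
    ∃ (N : ℕ) (C : ℝ), ∀ n : ℕ, N ≤ n → ∀ κ : Fin ℓ → ℕ,
      (∀ i, ρ * n ≤ (κ i : ℝ)) → (∑ i, κ i = n) →
      ∀ F : (Fin n → Fin ℓ) → ℝ, booleanOn ℓ n κ F →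
      ∀ p : (Fin n → Fin ℓ) → ℝ, degreeOne ℓ n κ p →
      ∃ g : (Fin n → Fin ℓ) → ℝ, booleanOn ℓ n κ g ∧ dictator ℓ n κ g ∧
        msExp ℓ n κ (fun u ↦ if F u = g u then (0 : ℝ) else 1) ≤
          4 * msExp ℓ n κ (fun u ↦ (F u - p u) ^ 2) +
            C * msExp ℓ n κ (fun u ↦ (F u - p u) ^ 2) ^ 2 := by
  refine ⟨max 4 ⌈6 / ρ⌉₊, 96 / (ρ / 2) ^ 2 * (18 + 16 * (6144 / (ρ / 2) ^ 8)) ^ 2,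
    fun n hN κ hκ hsum F hF p hp ↦ ?_⟩
  obtain ⟨hn, hnρ⟩ := max_le_iff.1 hN
  have hκ' (a : Fin ℓ) : ρ / 2 * n + 3 ≤ κ a := by
    have hρn := (div_le_iff₀ hρ).1 (Nat.ceil_le.1 hnρ)
    linarith [hκ a]
  exact hF.exists_dictator hp (multislice_nonempty hsum) hn (half_pos hρ) hκ'

/-- **FKN theorem for the multislice, Boolean form.**  If `F` is Boolean on a `ρ`-balanced
multislice and `‖F^{>1}‖² = ε` (expressed via the orthogonal projection `p = F^{≤1}` onto the
degree-one subspace), then `F` agrees with some Boolean dictator except with probability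
`4ε + Cε²`. -/
theorem fkn_multislice_boolean (ℓ : ℕ) (hℓ : 2 ≤ ℓ) (ρ : ℝ) (hρ : 0 < ρ) :
    ∃ (N : ℕ) (C : ℝ), ∀ n : ℕ, N ≤ n → ∀ κ : Fin ℓ → ℕ,
      (∀ i, 0 < κ i) → (∀ i, ρ * n ≤ (κ i : ℝ)) → (∑ i, κ i = n) →
      ∀ F : (Fin n → Fin ℓ) → ℝ, booleanOn ℓ n κ F →
      ∀ p : (Fin n → Fin ℓ) → ℝ, degreeOne ℓ n κ p →
      (∀ h : (Fin n → Fin ℓ) → ℝ, degreeOne ℓ n κ h →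
        msExp ℓ n κ (fun u => (F u - p u) * h u) = 0) →
      ∀ ε : ℝ, msExp ℓ n κ (fun u => (F u - p u) ^ 2) = ε →
      ∃ g : (Fin n → Fin ℓ) → ℝ, booleanOn ℓ n κ g ∧ dictator ℓ n κ g ∧
        msExp ℓ n κ (fun u => if F u = g u then (0 : ℝ) else 1) ≤ 4 * ε + C * ε ^ 2 := by
  obtain ⟨N, C, h⟩ := fkn_multislice_boolean_general ℓ ρ hρ
  exact ⟨N, C, fun n hn κ _ hκ hsum F hF p hp _ ε hε ↦ hε ▸ h n hn κ hκ hsum F hF p hp⟩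
end
end
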